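/- arXiv:2401.11251 — 2 statements merged into one kernel-verified Lean document; each statement's English description precedes it below -/
import Mathlib

section
/- Let ω and σ be weight functions. If σ(t)=O(ω(t)) as t→∞, then S_{{ω}}(ℝ^d) ⊆ S_{{σ}}(ℝ^d) for every dimension d∈ℕ (this implication holds even when ω and σ are only general weight functions). Conversely, if S_{{ω}}(ℝ) ⊆ S_{{σ}}(ℝ) (dimension d=1), then σ(t)=O(ω(t)) as t→∞. In particular, σ(t)=O(ω(t)) as t→∞ is equivalent to the inclusion S_{{ω}}(ℝ^d) ⊆ S_{{σ}}(ℝ^d) holding for all d∈ℕ. -/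
/-!
The weight `exp ((1/l) φ*_ω (l k))` equals `sup_{x ≥ 1} x ^ k * exp (-ω x / l)` (`le_wWeight`,
`wWeight_le`), and every estimate on weights is read off from this formula. In particular the
weights are supermultiplicative and, by (α), absorb geometric factors `A ^ k` after increasing `l`.

If `σ ≤ A (ω + 1)` on `[1, ∞)`, then the `ω`-weight with parameter `l` is at most a constant times
the `σ`-weight with parameter `A l`, which gives the inclusion in every dimension.

For the converse, consider `F (y) = ∑_{n ≥ 1} exp (-ω n) g (y - n)` with the Gaussian
`g (y) = exp (-y² / 2)`. The three-term recurrence for the derivatives of `g` yields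
`|y| ^ j |g⁽ᵏ⁾ (y)| ≤ 2 ^ k √((j + k)!)`, and (β) says that `√(k!)` is dominated by the `ω`-weights
up to a geometric factor; together with `n ^ j exp (-ω n / 2) ≤ wWeight ω 2 j` this puts `F` in
`S_{{ω}}(ℝ)` (`exists_testFun_bound`). By the inclusion `F` lies in `S_{{σ}}(ℝ)`, so
`n ^ p exp (-ω n) ≤ n ^ p F (n) ≤ C wWeight σ l p` for all `p`. Convexity of `t ↦ σ (exp t)` provides
a supporting line at `log n`; taking for `p` the integer part of its slope divided by `l` gives
`wWeight σ l p ≤ n ^ (p + 1) exp (-σ n / l)` (`exists_wWeight_le`). Therefore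
`σ n ≤ l (ω n + log n + log C)`, which is `O (ω n)` by (γ), and monotonicity with (α) passes from
integers to real arguments.
-/

open Filter Asymptotics

noncomputable section

/-- Partial derivative operator in coordinate `i`. -/
def pderivOp {d : ℕ} (i : Fin d) (f : (Fin d → ℝ) → ℝ) : (Fin d → ℝ) → ℝ :=
  fun x => fderiv ℝ f x (Pi.single i 1)

/-- Iterated partial derivative `∂^β f` for a multi-index `β`. -/
def mderiv {d : ℕ} (β : Fin d → ℕ) (f : (Fin d → ℝ) → ℝ) : (Fin d → ℝ) → ℝ :=
  (List.finRange d).foldr (fun i g => (pderivOp i)^[β i] g) f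

/-- The monomial `x^α` for a multi-index `α`. -/
def mpow {d : ℕ} (x : Fin d → ℝ) (α : Fin d → ℕ) : ℝ := ∏ i, x i ^ α i

/-- The length `|α| = α 0 + ⋯ + α (d-1)` of a multi-index. -/
def msize {d : ℕ} (α : Fin d → ℕ) : ℕ := ∑ i, α i

/-- Young conjugate `φ*_ω(s) = sup_{t ≥ 0} (s·t − ω(e^t))`. -/
def youngConj (ω : ℝ → ℝ) (s : ℝ) : ℝ :=
  sSup {y : ℝ | ∃ t : ℝ, 0 ≤ t ∧ y = s * t - ω (Real.exp t)}

/-- A general weight function: continuous, increasing, `ω:[0,∞)→[0,∞)`, with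
conditions (α), (γ), (δ) (condition (β) is not required). -/
structure IsGenWeightFun (ω : ℝ → ℝ) : Prop where
  nonneg : ∀ t, 0 ≤ t → 0 ≤ ω t
  continuous : ContinuousOn ω (Set.Ici 0)
  mono : MonotoneOn ω (Set.Ici 0)
  alpha : ∃ L : ℝ, 1 ≤ L ∧ ∀ t, 0 ≤ t → ω (2 * t) ≤ L * (ω t + 1)
  gamma : Real.log =o[Filter.atTop] ω
  delta : ConvexOn ℝ (Set.Ici 0) fun t => ω (Real.exp t)

/-- A weight function: a general weight function which moreover satisfies
(β): `ω(t) = O(t²)` as `t → ∞`. -/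
structure IsWeightFun (ω : ℝ → ℝ) extends IsGenWeightFun ω : Prop where
  beta : ω =O[Filter.atTop] fun t : ℝ => t ^ 2

/-- The weight `exp((1/l)·φ*_ω(l·k))`. -/
def wWeight (ω : ℝ → ℝ) (l : ℝ) (k : ℕ) : ℝ :=
  Real.exp (1 / l * youngConj ω (l * (k : ℝ)))

/-- Roumieu Gelfand–Shilov class `S_{{ω}}(ℝ^d)`. -/
def SRoumieuW (ω : ℝ → ℝ) (d : ℕ) : Set ((Fin d → ℝ) → ℝ) :=
  {f | ContDiff ℝ (⊤ : ℕ∞) f ∧ ∃ l > 0, ∃ C > 0, ∀ α β : Fin d → ℕ, ∀ x : Fin d → ℝ,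
    |mpow x α * mderiv β f x| ≤ C * wWeight ω l (msize α + msize β)}

/-- Beurling Gelfand–Shilov class `S_{(ω)}(ℝ^d)`. -/
def SBeurlingW (ω : ℝ → ℝ) (d : ℕ) : Set ((Fin d → ℝ) → ℝ) :=
  {f | ContDiff ℝ (⊤ : ℕ∞) f ∧ ∀ l > 0, ∃ C > 0, ∀ α β : Fin d → ℕ, ∀ x : Fin d → ℝ,
    |mpow x α * mderiv β f x| ≤ C * wWeight ω l (msize α + msize β)}

/-- Continuity of the inclusion `S_(ω)(ℝ^d) ⊆ S_(σ)(ℝ^d)`: for every `μ > 0` there are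
`ν > 0` and `C ≥ 1` with `q_{σ,μ}(f) ≤ C · q_{ω,ν}(f)` for all `f ∈ S_(ω)(ℝ^d)`,
expressed via bounding constants. -/
def contIncBW (ω σ : ℝ → ℝ) (d : ℕ) : Prop :=
  ∀ μ > 0, ∃ ν > 0, ∃ C : ℝ, 1 ≤ C ∧ ∀ f ∈ SBeurlingW ω d, ∀ D : ℝ, 0 ≤ D →
    (∀ α β : Fin d → ℕ, ∀ x : Fin d → ℝ,
      |mpow x α * mderiv β f x| ≤ D * wWeight ω ν (msize α + msize β)) →
    (∀ α β : Fin d → ℕ, ∀ x : Fin d → ℝ,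
      |mpow x α * mderiv β f x| ≤ C * D * wWeight σ μ (msize α + msize β))

/-- `M ∈ LC`: normalized, log-convex, with `M_p^{1/p} → ∞`. -/
structure IsLC (M : ℕ → ℝ) : Prop where
  pos : ∀ p, 0 < M p
  norm0 : M 0 = 1
  norm1 : 1 ≤ M 1
  logConvex : ∀ p : ℕ, M (p + 1) ^ 2 ≤ M p * M (p + 2)
  root_tendsto : Filter.Tendsto (fun p : ℕ => M p ^ (1 / (p : ℝ))) Filter.atTop Filter.atTop

/-- `M ⪯ N`: `∃ C ≥ 1, ∀ p, M_p ≤ C^p N_p`. -/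
def seqPreceq (M N : ℕ → ℝ) : Prop := ∃ C : ℝ, 1 ≤ C ∧ ∀ p : ℕ, M p ≤ C ^ p * N p

/-- `M ◁ N`: `(M_p/N_p)^{1/p} → 0`. -/
def seqLtriangle (M N : ℕ → ℝ) : Prop :=
  Filter.Tendsto (fun p : ℕ => (M p / N p) ^ (1 / (p : ℝ))) Filter.atTop (nhds 0)

/-- `‖f‖_{∞,M,h} ≤ C`, expressed pointwise. -/
def seqBound {d : ℕ} (M : ℕ → ℝ) (h C : ℝ) (f : (Fin d → ℝ) → ℝ) : Prop :=
  ∀ α β : Fin d → ℕ, ∀ x : Fin d → ℝ,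
    |mpow x α * mderiv β f x| ≤ C * h ^ (msize α + msize β) * M (msize α + msize β)

/-- Roumieu class `S_{{M}}(ℝ^d)` for a single weight sequence. -/
def SRoumieuSeq (M : ℕ → ℝ) (d : ℕ) : Set ((Fin d → ℝ) → ℝ) :=
  {f | ContDiff ℝ (⊤ : ℕ∞) f ∧ ∃ C > 0, ∃ h > 0, seqBound M h C f}

/-- Beurling class `S_(M)(ℝ^d)` for a single weight sequence. -/
def SBeurlingSeq (M : ℕ → ℝ) (d : ℕ) : Set ((Fin d → ℝ) → ℝ) :=
  {f | ContDiff ℝ (⊤ : ℕ∞) f ∧ ∀ h > 0, ∃ C > 0, seqBound M h C f}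

/-- Moderate growth (M2). -/
def condM2 (M : ℕ → ℝ) : Prop := ∃ C : ℝ, 1 ≤ C ∧ ∀ p q : ℕ, M (p + q) ≤ C ^ (p + q) * M p * M q

/-- Derivation closedness (M2'). -/
def condM2' (M : ℕ → ℝ) : Prop := ∃ D : ℝ, 1 ≤ D ∧ ∀ p : ℕ, M (p + 1) ≤ D ^ (p + 1) * M p

/-- Condition (12L2R) for a single sequence. -/
def cond12L2Rseq (M : ℕ → ℝ) : Prop :=
  ∃ B > 0, ∃ C > 0, ∃ H > 0, ∀ p q : ℕ,
    (p : ℝ) ^ ((p : ℝ) / 2) * M q ≤ B * C ^ p * H ^ (p + q) * M (p + q)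

/-- Condition (12L2B) for a single sequence. -/
def cond12L2Bseq (M : ℕ → ℝ) : Prop :=
  ∃ H > 0, ∀ C > 0, ∃ B > 0, ∀ p q : ℕ,
    (p : ℝ) ^ ((p : ℝ) / 2) * M q ≤ B * C ^ p * H ^ (p + q) * M (p + q)

/-- Non-quasianalyticity of a weight sequence: `∑ M_{p-1}/M_p < ∞`. -/
def nonQA (M : ℕ → ℝ) : Prop := Summable fun p : ℕ => M p / M (p + 1)

/-- Continuity of the inclusion `S_(M)(ℝ^d) ⊆ S_(N)(ℝ^d)` for single sequences. -/
def contIncBSeq (M N : ℕ → ℝ) (d : ℕ) : Prop :=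
  ∀ h > 0, ∃ h' > 0, ∃ C : ℝ, 1 ≤ C ∧ ∀ f ∈ SBeurlingSeq M d, ∀ D : ℝ, 0 ≤ D →
    seqBound M h' D f → seqBound N h (C * D) f

/-- A weight matrix: positive normalized sequences, pointwise nondecreasing in the index. -/
def IsWeightMatrix (M : ℝ → ℕ → ℝ) : Prop :=
  (∀ l, 0 < l → (∀ p, 0 < M l p) ∧ M l 0 = 1) ∧
    ∀ l k, 0 < l → l ≤ k → ∀ p, M l p ≤ M k p

/-- Standard log-convexity of a weight matrix. -/
def StdLogConvex (M : ℝ → ℕ → ℝ) : Prop := ∀ l, 0 < l → IsLC (M l)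

/-- Roumieu class `S_{{𝓜}}(ℝ^d)` for a weight matrix. -/
def SRoumieuMat (M : ℝ → ℕ → ℝ) (d : ℕ) : Set ((Fin d → ℝ) → ℝ) :=
  {f | ∃ l > 0, f ∈ SRoumieuSeq (M l) d}

/-- Beurling class `S_(𝓜)(ℝ^d)` for a weight matrix. -/
def SBeurlingMat (M : ℝ → ℕ → ℝ) (d : ℕ) : Set ((Fin d → ℝ) → ℝ) :=
  {f | ∀ l > 0, f ∈ SBeurlingSeq (M l) d}

/-- `𝓜{⪯}𝓝`. -/
def matPreceqR (M N : ℝ → ℕ → ℝ) : Prop := ∀ l > 0, ∃ k > 0, seqPreceq (M l) (N k)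

/-- `𝓜(⪯)𝓝`. -/
def matPreceqB (M N : ℝ → ℕ → ℝ) : Prop := ∀ l > 0, ∃ k > 0, seqPreceq (M k) (N l)

/-- `𝓜 ◁ 𝓝`. -/
def matLtriangle (M N : ℝ → ℕ → ℝ) : Prop := ∀ l > 0, ∀ k > 0, seqLtriangle (M l) (N k)

/-- Condition (12L2R) for a weight matrix (Roumieu). -/
def cond12L2RMat (M : ℝ → ℕ → ℝ) : Prop :=
  ∀ l > 0, ∃ k, l ≤ k ∧ ∃ B > 0, ∃ C > 0, ∃ H > 0, ∀ p q : ℕ,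
    (p : ℝ) ^ ((p : ℝ) / 2) * M l q ≤ B * C ^ p * H ^ (p + q) * M k (p + q)

/-- Condition (M2')_R for a weight matrix (Roumieu). -/
def condM2'RMat (M : ℝ → ℕ → ℝ) : Prop :=
  ∀ l > 0, ∃ k, l ≤ k ∧ ∃ A : ℝ, 1 ≤ A ∧ ∀ p : ℕ, M l (p + 1) ≤ A ^ (p + 1) * M k p

/-- Condition (12L2B) for a weight matrix (Beurling). -/
def cond12L2BMat (M : ℝ → ℕ → ℝ) : Prop :=
  ∀ l > 0, ∃ k, 0 < k ∧ k ≤ l ∧ ∃ H > 0, ∀ C > 0, ∃ B > 0, ∀ p q : ℕ,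
    (p : ℝ) ^ ((p : ℝ) / 2) * M k q ≤ B * C ^ p * H ^ (p + q) * M l (p + q)

/-- Condition (M2')_B for a weight matrix (Beurling). -/
def condM2'BMat (M : ℝ → ℕ → ℝ) : Prop :=
  ∀ l > 0, ∃ k, 0 < k ∧ k ≤ l ∧ ∃ A : ℝ, 1 ≤ A ∧ ∀ p : ℕ, M k (p + 1) ≤ A ^ (p + 1) * M l p

/-- Continuity of the inclusion `S_(𝓜)(ℝ^d) ⊆ S_(𝓝)(ℝ^d)` for weight matrices. -/
def contIncBMat (M N : ℝ → ℕ → ℝ) (d : ℕ) : Prop :=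
  ∀ l > 0, ∀ h > 0, ∃ k > 0, ∃ h' > 0, ∃ C : ℝ, 1 ≤ C ∧
    ∀ f ∈ SBeurlingMat M d, ∀ D : ℝ, 0 ≤ D →
      seqBound (M k) h' D f → seqBound (N l) h (C * D) f

/-- Associated function `ω_M(t) = sup_p log(t^p / M_p)`. -/
def assocFun (M : ℕ → ℝ) (t : ℝ) : ℝ :=
  sSup {y : ℝ | ∃ p : ℕ, y = Real.log (t ^ p / M p)}

/-- Condition (α) for a function. -/
def condAlpha (ω : ℝ → ℝ) : Prop := ∃ L : ℝ, 1 ≤ L ∧ ∀ t, 0 ≤ t → ω (2 * t) ≤ L * (ω t + 1)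

/-- Condition (ω6): `∃ H ≥ 1, ∀ t ≥ 0, 2ω(t) ≤ ω(Ht) + H`. -/
def condOmega6 (ω : ℝ → ℝ) : Prop := ∃ H : ℝ, 1 ≤ H ∧ ∀ t, 0 ≤ t → 2 * ω t ≤ ω (H * t) + H

/-- The sequence `W^{(λ)}_p = exp((1/λ)φ*_ω(λ p))`. -/
def wSeq (ω : ℝ → ℝ) (l : ℝ) (p : ℕ) : ℝ := Real.exp (1 / l * youngConj ω (l * (p : ℝ)))

end

/-! ### The weights as suprema over `[1, ∞)` -/

lemma bddAbove_young {ω : ℝ → ℝ} (h : IsGenWeightFun ω) {s : ℝ} (hs : 0 ≤ s) :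
    BddAbove {y : ℝ | ∃ t : ℝ, 0 ≤ t ∧ y = s * t - ω (Real.exp t)} := by
  have hc : (0 : ℝ) < 1 / (s + 1) := by positivity
  obtain ⟨T, hT⟩ := eventually_atTop.1 (h.gamma.def hc)
  refine ⟨s * Real.log (max T 1), ?_⟩
  rintro y ⟨t, ht, rfl⟩
  have hlog : 0 ≤ Real.log (max T 1) := Real.log_nonneg (le_max_right _ _)
  have hω := h.nonneg (Real.exp t) (Real.exp_pos t).le
  by_cases hle : T ≤ Real.exp t
  · have h1 := hT _ hle
    rw [Real.log_exp, Real.norm_of_nonneg ht, Real.norm_of_nonneg hω, one_div,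
      inv_mul_eq_div, le_div_iff₀ (by positivity)] at h1
    nlinarith [mul_nonneg hs hlog]
  · have h1 : t ≤ Real.log (max T 1) := by
      rw [Real.le_log_iff_exp_le (by positivity)]
      exact (not_le.1 hle).le.trans (le_max_left _ _)
    nlinarith [mul_le_mul_of_nonneg_left h1 hs]

/-- Together with `wWeight_le`: `wWeight ω l k = sup_{x ≥ 1} x ^ k * exp (-ω x / l)`. -/
lemma le_wWeight {ω : ℝ → ℝ} (h : IsGenWeightFun ω) {l : ℝ} (hl : 0 < l) (k : ℕ) {x : ℝ}
    (hx : 1 ≤ x) : x ^ k * Real.exp (-(ω x) / l) ≤ wWeight ω l k := by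
  have hx0 : 0 < x := by linarith
  have h1 : l * k * Real.log x - ω x ≤ youngConj ω (l * k) :=
    le_csSup (bddAbove_young h (by positivity))
      ⟨Real.log x, Real.log_nonneg hx, by rw [Real.exp_log hx0]⟩
  calc x ^ k * Real.exp (-(ω x) / l)
      = Real.exp (1 / l * (l * k * Real.log x - ω x)) := by
        have : x ^ k = Real.exp (k * Real.log x) := by
          rw [Real.exp_nat_mul, Real.exp_log hx0]
        rw [this, ← Real.exp_add]
        congr 1
        field_simp
        ring
    _ ≤ _ := Real.exp_le_exp.2 (mul_le_mul_of_nonneg_left h1 (by positivity))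

lemma wWeight_le {ω : ℝ → ℝ} {l : ℝ} (hl : 0 < l) (k : ℕ) {M : ℝ}
    (hM : ∀ x, 1 ≤ x → x ^ k * Real.exp (-(ω x) / l) ≤ M) : wWeight ω l k ≤ M := by
  have hM0 : 0 < M := lt_of_lt_of_le (by positivity) (hM 1 le_rfl)
  have h1 : youngConj ω (l * k) ≤ l * Real.log M := by
    refine csSup_le ⟨_, 0, le_rfl, rfl⟩ ?_
    rintro y ⟨t, ht, rfl⟩
    have h2 := hM (Real.exp t) (Real.one_le_exp ht)
    rw [← Real.exp_nat_mul, ← Real.exp_add, ← Real.le_log_iff_exp_le hM0] at h2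
    have h3 := mul_le_mul_of_nonneg_left h2 hl.le
    have h4 : l * (k * t + -ω (Real.exp t) / l) = l * k * t - ω (Real.exp t) := by
      field_simp
      ring
    linarith
  rw [wWeight, ← Real.le_log_iff_exp_le hM0, one_div, inv_mul_eq_div, div_le_iff₀ hl]
  linarith

lemma wWeight_pos (ω : ℝ → ℝ) (l : ℝ) (k : ℕ) : 0 < wWeight ω l k := Real.exp_pos _

lemma wWeight_mono {ω : ℝ → ℝ} (h : IsGenWeightFun ω) {l l' : ℝ} (hl : 0 < l) (hll : l ≤ l')
    (k : ℕ) : wWeight ω l k ≤ wWeight ω l' k := by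
  refine wWeight_le hl k fun x hx => le_trans ?_ (le_wWeight h (hl.trans_le hll) k hx)
  have := h.nonneg x (by linarith)
  rw [neg_div, neg_div]
  gcongr

lemma wWeight_mul_le {ω : ℝ → ℝ} (h : IsGenWeightFun ω) {l : ℝ} (hl : 0 < l) (j k : ℕ) :
    wWeight ω l j * wWeight ω l k ≤ wWeight ω l (j + k) := by
  have key : ∀ x y : ℝ, 1 ≤ x → 1 ≤ y →
      (x ^ j * Real.exp (-(ω x) / l)) * (y ^ k * Real.exp (-(ω y) / l)) ≤
        wWeight ω l (j + k) := by
    intro x y hx hy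
    have hex : Real.exp (-(ω x) / l) ≤ 1 := Real.exp_le_one_iff.2
      (div_nonpos_of_nonpos_of_nonneg (neg_nonpos.2 (h.nonneg x (by linarith))) hl.le)
    have hey : Real.exp (-(ω y) / l) ≤ 1 := Real.exp_le_one_iff.2
      (div_nonpos_of_nonpos_of_nonneg (neg_nonpos.2 (h.nonneg y (by linarith))) hl.le)
    rcases le_total x y with hxy | hxy
    · calc _ ≤ (y ^ j * 1) * (y ^ k * Real.exp (-(ω y) / l)) := by gcongr
        _ = y ^ (j + k) * Real.exp (-(ω y) / l) := by ring
        _ ≤ _ := le_wWeight h hl _ hy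
    · calc _ ≤ (x ^ j * Real.exp (-(ω x) / l)) * (x ^ k * 1) := by gcongr
        _ = x ^ (j + k) * Real.exp (-(ω x) / l) := by ring
        _ ≤ _ := le_wWeight h hl _ hx
  rw [← le_div_iff₀ (wWeight_pos _ _ _)]
  refine wWeight_le hl j fun x hx => ?_
  rw [le_div_iff₀ (wWeight_pos _ _ _), mul_comm, ← le_div_iff₀ (by positivity)]
  refine wWeight_le hl k fun y hy => ?_
  rw [le_div_iff₀ (by positivity), mul_comm]
  exact key x y hx hy

/-- Condition (α) lets the weights absorb geometric factors, at the cost of a larger `l`. -/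
lemma exists_pow_mul_wWeight_le {ω : ℝ → ℝ} (h : IsGenWeightFun ω) (A : ℝ) (hA : 0 ≤ A) {l : ℝ}
    (hl : 0 < l) : ∃ D > 0, ∃ l' > 0, ∀ k : ℕ, A ^ k * wWeight ω l k ≤ D * wWeight ω l' k := by
  obtain ⟨L, hL1, hL⟩ := h.alpha
  have hL0 : 0 < L := by linarith
  have two : ∀ m : ℕ, ∃ D > 0, ∃ l' > 0, ∀ k : ℕ,
      ((2 : ℝ) ^ m) ^ k * wWeight ω l k ≤ D * wWeight ω l' k := by
    intro m
    induction m with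
    | zero => exact ⟨1, one_pos, l, hl, fun k => by simp⟩
    | succ m ih =>
      obtain ⟨D, hD, l', hl', H⟩ := ih
      refine ⟨D * Real.exp (1 / l'), by positivity, L * l', by positivity, fun k => ?_⟩
      have step : (2 : ℝ) ^ k * wWeight ω l' k ≤ Real.exp (1 / l') * wWeight ω (L * l') k := by
        rw [mul_comm, ← le_div_iff₀ (by positivity)]
        refine wWeight_le hl' k fun x hx => ?_
        rw [le_div_iff₀ (by positivity)]
        have h1 : -(ω x) / l' ≤ 1 / l' + -(ω (2 * x)) / (L * l') := by
          have h2 := hL x (by linarith)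
          have h3 : 1 / l' + -(ω (2 * x)) / (L * l') - -(ω x) / l'
              = (L * (ω x + 1) - ω (2 * x)) / (L * l') := by
            field_simp
            ring
          have h4 : 0 ≤ (L * (ω x + 1) - ω (2 * x)) / (L * l') :=
            div_nonneg (by linarith) (by positivity)
          linarith
        calc x ^ k * Real.exp (-(ω x) / l') * 2 ^ k
            ≤ x ^ k * Real.exp (1 / l' + -(ω (2 * x)) / (L * l')) * 2 ^ k := by gcongr
          _ = Real.exp (1 / l') * ((2 * x) ^ k * Real.exp (-(ω (2 * x)) / (L * l'))) := by
            rw [Real.exp_add, mul_pow]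
            ring
          _ ≤ _ := by
            gcongr
            exact le_wWeight h (by positivity) k (by linarith)
      calc ((2 : ℝ) ^ (m + 1)) ^ k * wWeight ω l k
          = 2 ^ k * (((2 : ℝ) ^ m) ^ k * wWeight ω l k) := by rw [pow_succ, mul_pow]; ring
        _ ≤ 2 ^ k * (D * wWeight ω l' k) :=
          mul_le_mul_of_nonneg_left (H k) (by positivity)
        _ = D * (2 ^ k * wWeight ω l' k) := by ring
        _ ≤ D * (Real.exp (1 / l') * wWeight ω (L * l') k) := by gcongr
        _ = _ := by ring
  obtain ⟨m, hm⟩ := pow_unbounded_of_one_lt A (one_lt_two (α := ℝ))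
  obtain ⟨D, hD, l', hl', H⟩ := two m
  refine ⟨D, hD, l', hl', fun k => le_trans ?_ (H k)⟩
  have := wWeight_pos ω l k
  gcongr

/-! ### The direct implication -/

lemma exists_le_mul_add_one {ω σ : ℝ → ℝ} (hω : IsGenWeightFun ω) (hσ : IsGenWeightFun σ)
    (hO : σ =O[atTop] ω) : ∃ A > 0, ∀ x, 1 ≤ x → σ x ≤ A * (ω x + 1) := by
  obtain ⟨c, hc, hO⟩ := hO.exists_pos
  obtain ⟨T, hT⟩ := eventually_atTop.1 hO.bound
  have hσT := hσ.nonneg (max T 1) (by positivity)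
  refine ⟨c + σ (max T 1), by positivity, fun x hx => ?_⟩
  have hωx := hω.nonneg x (by linarith)
  rcases le_total T x with h | h
  · have := hT x h
    rw [Real.norm_of_nonneg hωx, Real.norm_of_nonneg (hσ.nonneg x (by linarith))] at this
    nlinarith [mul_nonneg hσT hωx]
  · have : σ x ≤ σ (max T 1) := hσ.mono (Set.mem_Ici.2 (by linarith))
      (Set.mem_Ici.2 (by positivity)) (h.trans (le_max_left _ _))
    nlinarith [mul_nonneg hσT hωx, mul_nonneg hc.le hωx]

lemma sRoumieuW_subset {ω σ : ℝ → ℝ} (hω : IsGenWeightFun ω) (hσ : IsGenWeightFun σ)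
    (hO : σ =O[atTop] ω) (d : ℕ) : SRoumieuW ω d ⊆ SRoumieuW σ d := by
  obtain ⟨A, hA, hle⟩ := exists_le_mul_add_one hω hσ hO
  rintro f ⟨hf, l, hl, C, hC, H⟩
  refine ⟨hf, A * l, by positivity, C * Real.exp (1 / l), by positivity, fun α β x => ?_⟩
  refine (H α β x).trans ?_
  rw [mul_assoc]
  gcongr
  refine wWeight_le hl _ fun x hx => ?_
  have h1 : -(ω x) / l ≤ 1 / l + -(σ x) / (A * l) := by
    have h3 : 1 / l + -(σ x) / (A * l) - -(ω x) / l = (A * (ω x + 1) - σ x) / (A * l) := by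
      field_simp
      ring
    have h4 : 0 ≤ (A * (ω x + 1) - σ x) / (A * l) :=
      div_nonneg (by linarith [hle x hx]) (by positivity)
    linarith
  calc x ^ (msize α + msize β) * Real.exp (-(ω x) / l)
      ≤ x ^ (msize α + msize β) * Real.exp (1 / l + -(σ x) / (A * l)) := by gcongr
    _ = Real.exp (1 / l) * (x ^ (msize α + msize β) * Real.exp (-(σ x) / (A * l))) := by
      rw [Real.exp_add]
      ring
    _ ≤ _ := by
      gcongr
      exact le_wWeight hσ (by positivity) _ hx

/-! ### Derivatives of the Gaussian -/

/-- The Gaussian `exp (-y² / 2)`. -/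
noncomputable def gau (y : ℝ) : ℝ := Real.exp (-(y ^ 2 / 2))

lemma contDiff_gau : ContDiff ℝ (⊤ : ℕ∞) gau := by
  unfold gau
  fun_prop

lemma iteratedDeriv_gau_one (y : ℝ) : iteratedDeriv 1 gau y = -y * gau y := by
  rw [iteratedDeriv_one]
  have h1 : HasDerivAt (fun y : ℝ => -(y ^ 2 / 2)) (-y) y := by
    refine ((hasDerivAt_pow 2 y).div_const 2).neg.congr_deriv ?_
    simp
  have := h1.exp.deriv
  unfold gau
  rw [this]
  ring

lemma differentiable_iteratedDeriv_gau (n : ℕ) : Differentiable ℝ (iteratedDeriv n gau) :=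
  contDiff_gau.differentiable_iteratedDeriv n (by exact_mod_cast ENat.natCast_lt_top n)

lemma iteratedDeriv_gau_add_two (n : ℕ) (y : ℝ) :
    iteratedDeriv (n + 2) gau y =
      -y * iteratedDeriv (n + 1) gau y - (n + 1) * iteratedDeriv n gau y := by
  have hd : ∀ k z, HasDerivAt (iteratedDeriv k gau) (iteratedDeriv (k + 1) gau z) z := by
    intro k z
    rw [iteratedDeriv_succ]
    exact (differentiable_iteratedDeriv_gau k z).hasDerivAt
  induction n generalizing y with
  | zero =>
    have h : iteratedDeriv 1 gau = fun y => -y * gau y := funext iteratedDeriv_gau_one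
    have h0 := hd 0 y
    rw [iteratedDeriv_zero] at h0
    rw [iteratedDeriv_succ, zero_add]
    have := ((hasDerivAt_id y).neg.mul h0).deriv
    have e : iteratedDeriv 1 gau = (-id) * gau := by rw [h]; rfl
    conv_lhs => rw [e]
    rw [this, iteratedDeriv_zero]
    simp
    ring
  | succ n ih =>
    have e : iteratedDeriv (n + 2) gau = ((-id) * iteratedDeriv (n + 1) gau) -
        (fun z => ((n : ℝ) + 1) * iteratedDeriv n gau z) := by
      funext z
      simp [ih z]
    rw [show n + 1 + 2 = (n + 2) + 1 by ring, iteratedDeriv_succ]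
    conv_lhs => rw [e]
    have := (((hasDerivAt_id y).neg.mul (hd (n + 1) y)).sub
      ((hd n y).const_mul ((n : ℝ) + 1))).deriv
    rw [this, show n + 1 + 1 = n + 2 by ring]
    simp
    ring

lemma pow_mul_gau_le (c : ℕ) (y : ℝ) : |y| ^ c * gau y ≤ Real.sqrt c.factorial := by
  apply Real.le_sqrt_of_sq_le
  have h := Real.pow_div_factorial_le_exp (y ^ 2) (sq_nonneg y) c
  rw [div_le_iff₀ (by positivity)] at h
  have e : gau y ^ 2 * Real.exp (y ^ 2) = 1 := by
    rw [gau, ← Real.exp_nat_mul, ← Real.exp_add]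
    simp
    ring
  calc (|y| ^ c * gau y) ^ 2 = gau y ^ 2 * (y ^ 2) ^ c := by
        rw [mul_pow, ← pow_mul, mul_comm c 2, pow_mul, sq_abs]; ring
    _ ≤ gau y ^ 2 * (Real.exp (y ^ 2) * c.factorial) := by gcongr
    _ = c.factorial := by rw [← mul_assoc, e, one_mul]

lemma mul_sqrt_factorial_le (c n : ℕ) :
    ((n : ℝ) + 1) * Real.sqrt (c + n).factorial ≤ Real.sqrt (c + (n + 2)).factorial := by
  apply Real.le_sqrt_of_sq_le
  rw [mul_pow, Real.sq_sqrt (by positivity), ← add_assoc, Nat.factorial_succ, Nat.factorial_succ]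
  push_cast
  have hc : (0 : ℝ) ≤ c := by positivity
  have hn : (0 : ℝ) ≤ n := by positivity
  rw [← mul_assoc]
  gcongr
  nlinarith [mul_nonneg hc hn, mul_nonneg hc hc]

/-- Induction over the three-term recurrence; the factor `2 ^ n` collects its two summands. -/
lemma pow_mul_iteratedDeriv_gau_le (n c : ℕ) (y : ℝ) :
    |y| ^ c * |iteratedDeriv n gau y| ≤ 2 ^ n * Real.sqrt (c + n).factorial := by
  have hg : |gau y| = gau y := abs_of_pos (Real.exp_pos _)
  induction n using Nat.twoStepInduction generalizing c with
  | zero => simpa [hg] using pow_mul_gau_le c y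
  | one =>
    rw [iteratedDeriv_gau_one, abs_mul, abs_neg, hg, ← mul_assoc, ← pow_succ]
    refine (pow_mul_gau_le (c + 1) y).trans ?_
    have := Real.sqrt_nonneg ((c + 1).factorial : ℝ)
    linarith
  | more n ih0 ih1 =>
    rw [iteratedDeriv_gau_add_two]
    have h1 := ih1 (c + 1)
    have h0 := ih0 c
    have h2 := mul_sqrt_factorial_le c n
    rw [show c + 1 + (n + 1) = c + (n + 2) by ring] at h1
    calc |y| ^ c * |-y * iteratedDeriv (n + 1) gau y - (n + 1) * iteratedDeriv n gau y|
        ≤ |y| ^ c * (|-y * iteratedDeriv (n + 1) gau y| + |(n + 1) * iteratedDeriv n gau y|) := by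
          gcongr
          exact abs_sub _ _
      _ = |y| ^ (c + 1) * |iteratedDeriv (n + 1) gau y| +
            (n + 1) * (|y| ^ c * |iteratedDeriv n gau y|) := by
          rw [abs_mul, abs_mul, abs_neg, abs_of_nonneg (by positivity : (0 : ℝ) ≤ n + 1)]
          ring
      _ ≤ 2 ^ (n + 1) * Real.sqrt (c + (n + 2)).factorial +
            (n + 1) * (2 ^ n * Real.sqrt (c + n).factorial) := by gcongr
      _ = 2 ^ (n + 1) * Real.sqrt (c + (n + 2)).factorial +
            2 ^ n * ((n + 1) * Real.sqrt (c + n).factorial) := by ring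
      _ ≤ 2 ^ (n + 1) * Real.sqrt (c + (n + 2)).factorial +
            2 ^ n * Real.sqrt (c + (n + 2)).factorial := by gcongr
      _ ≤ 2 ^ (n + 2) * Real.sqrt (c + (n + 2)).factorial := by
          rw [← add_mul]
          gcongr
          have : (0 : ℝ) < 2 ^ n := by positivity
          rw [pow_succ, pow_add]
          linarith

/-- Condition (β) says that the weights dominate those of the Gaussian. -/
lemma exists_sqrt_factorial_le {ω : ℝ → ℝ} (h : IsWeightFun ω) :
    ∃ A ≥ (1 : ℝ), ∀ k : ℕ, Real.sqrt k.factorial ≤ A * A ^ k * wWeight ω 1 k := by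
  obtain ⟨B, hB, hO⟩ := h.beta.exists_pos
  obtain ⟨T, hT⟩ := eventually_atTop.1 hO.bound
  have hωT := h.nonneg (max T 1) (by positivity)
  set b := B + ω (max T 1) with hb
  have hb0 : 0 < b := by positivity
  have hle : ∀ x, 1 ≤ x → ω x ≤ b * x ^ 2 := by
    intro x hx
    rcases le_total T x with hTx | hTx
    · have h1 := hT x hTx
      rw [Real.norm_of_nonneg (h.nonneg x (by linarith)), Real.norm_of_nonneg (sq_nonneg x)] at h1
      nlinarith [mul_nonneg hωT (sq_nonneg x)]
    · have h1 : ω x ≤ ω (max T 1) := h.mono (Set.mem_Ici.2 (by linarith))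
        (Set.mem_Ici.2 (by positivity)) (hTx.trans (le_max_left _ _))
      have h2 : 1 ≤ x ^ 2 := one_le_pow₀ hx
      nlinarith [mul_nonneg hωT (sub_nonneg.2 h2), mul_nonneg hB.le (sq_nonneg x)]
  refine ⟨Real.exp b, Real.one_le_exp hb0.le, fun k => ?_⟩
  -- test the supremum defining the weight at `x = √(max k 1)`
  set x := Real.sqrt (max k 1) with hx
  have hx1 : 1 ≤ x := Real.one_le_sqrt.2 (le_max_right _ _)
  have hx2 : x ^ 2 = max (k : ℝ) 1 := Real.sq_sqrt (by positivity)
  have h1 := le_wWeight h.toIsGenWeightFun one_pos k hx1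
  have h2 : Real.sqrt k.factorial ≤ x ^ k := by
    apply Real.sqrt_le_iff.2 ⟨by positivity, ?_⟩
    rw [← pow_mul, mul_comm, pow_mul, hx2]
    calc (k.factorial : ℝ) ≤ (k : ℝ) ^ k := by exact_mod_cast Nat.factorial_le_pow k
      _ ≤ _ := by gcongr; exact le_max_left _ _
  have h3 : 1 ≤ Real.exp b * Real.exp b ^ k * Real.exp (-(ω x) / 1) := by
    rw [← Real.exp_nat_mul, ← Real.exp_add, ← Real.exp_add]
    apply Real.one_le_exp
    have h4 := hle x hx1
    have h5 : max (k : ℝ) 1 ≤ k + 1 := max_le (by linarith) (by linarith [k.cast_nonneg (α := ℝ)])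
    rw [hx2] at h4
    have h6 := mul_le_mul_of_nonneg_left h5 hb0.le
    rw [div_one]
    linarith
  calc Real.sqrt k.factorial ≤ x ^ k * 1 := by rw [mul_one]; exact h2
    _ ≤ x ^ k * (Real.exp b * Real.exp b ^ k * Real.exp (-(ω x) / 1)) := by gcongr
    _ = Real.exp b * Real.exp b ^ k * (x ^ k * Real.exp (-(ω x) / 1)) := by ring
    _ ≤ _ := by gcongr

/-! ### A function of slowest possible decay in `S_{{ω}}(ℝ)` -/

/-- The summand `exp (-ω (n + 1)) * gau (y - (n + 1))` of the test function. -/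
noncomputable def bump (ω : ℝ → ℝ) (n : ℕ) (y : ℝ) : ℝ := Real.exp (-(ω (n + 1))) * gau (y - (n + 1))

/-- A sum of Gaussians centred at the positive integers `n` with heights `exp (-ω n)`. -/
noncomputable def testFun (ω : ℝ → ℝ) (y : ℝ) : ℝ := ∑' n : ℕ, bump ω n y

lemma summable_exp_half {ω : ℝ → ℝ} (h : IsGenWeightFun ω) :
    Summable fun n : ℕ => Real.exp (-(ω (n + 1)) / 2) := by
  have hs : Summable fun n : ℕ => 1 / ((n + 1 : ℕ) : ℝ) ^ 2 :=
    (summable_nat_add_iff 1).2 (Real.summable_one_div_nat_pow.2 one_lt_two)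
  refine hs.of_norm_bounded_eventually_nat ?_
  have h1 := h.gamma.def (by norm_num : (0 : ℝ) < 1 / 4)
  have ht : Tendsto (fun n : ℕ => ((n : ℝ) + 1)) atTop atTop :=
    tendsto_atTop_add_const_right _ _ tendsto_natCast_atTop_atTop
  filter_upwards [ht.eventually h1] with n hn
  have hn0 : (0 : ℝ) < n + 1 := by positivity
  rw [Real.norm_of_nonneg (h.nonneg _ hn0.le)] at hn
  have h2 := (le_abs_self _).trans hn
  rw [Real.norm_of_nonneg (Real.exp_pos _).le]
  push_cast
  have h3 : Real.exp (-(2 * Real.log ((n : ℝ) + 1))) = 1 / ((n : ℝ) + 1) ^ 2 := by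
    rw [Real.exp_neg, one_div, two_mul, Real.exp_add, Real.exp_log hn0, sq]
  rw [← h3]
  apply Real.exp_le_exp.2
  linarith

lemma exp_le_exp_half {ω : ℝ → ℝ} (h : IsGenWeightFun ω) (n : ℕ) :
    Real.exp (-(ω (n + 1))) ≤ Real.exp (-(ω (n + 1)) / 2) := by
  apply Real.exp_le_exp.2
  linarith [h.nonneg ((n : ℝ) + 1) (by positivity)]

lemma contDiff_bump (ω : ℝ → ℝ) (n : ℕ) : ContDiff ℝ (⊤ : ℕ∞) (bump ω n) :=
  contDiff_const.mul (contDiff_gau.comp (contDiff_id.sub contDiff_const))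

lemma iteratedDeriv_bump (ω : ℝ → ℝ) (n k : ℕ) (y : ℝ) :
    iteratedDeriv k (bump ω n) y =
      Real.exp (-(ω (n + 1))) * iteratedDeriv k gau (y - (n + 1)) := by
  unfold bump
  rw [iteratedDeriv_const_mul_field, iteratedDeriv_comp_sub_const]

lemma norm_iteratedFDeriv_bump (ω : ℝ → ℝ) (n k : ℕ) (y : ℝ) :
    ‖iteratedFDeriv ℝ k (bump ω n) y‖ =
      Real.exp (-(ω (n + 1))) * |iteratedDeriv k gau (y - (n + 1))| := by
  rw [norm_iteratedFDeriv_eq_norm_iteratedDeriv, iteratedDeriv_bump, Real.norm_eq_abs, abs_mul,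
    abs_of_pos (Real.exp_pos _)]

/-- Uniform bounds on the summands, which justify differentiating term by term. -/
lemma norm_iteratedFDeriv_bump_le {ω : ℝ → ℝ} (h : IsGenWeightFun ω) (n k : ℕ) (y : ℝ) :
    ‖iteratedFDeriv ℝ k (bump ω n) y‖ ≤
      Real.exp (-(ω (n + 1)) / 2) * (2 ^ k * Real.sqrt k.factorial) := by
  rw [norm_iteratedFDeriv_bump]
  have h1 := pow_mul_iteratedDeriv_gau_le k 0 (y - (n + 1))
  rw [pow_zero, one_mul, zero_add] at h1
  exact mul_le_mul (exp_le_exp_half h n) h1 (abs_nonneg _) (Real.exp_pos _).le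

lemma contDiff_testFun {ω : ℝ → ℝ} (h : IsGenWeightFun ω) :
    ContDiff ℝ (⊤ : ℕ∞) (testFun ω) :=
  contDiff_tsum (contDiff_bump ω) (fun _ _ => (summable_exp_half h).mul_right _)
    (fun k n y _ => norm_iteratedFDeriv_bump_le h n k y)

lemma abs_iteratedDeriv_testFun_le {ω : ℝ → ℝ} (h : IsGenWeightFun ω) (k : ℕ) (y : ℝ) :
    |iteratedDeriv k (testFun ω) y| ≤
      ∑' n : ℕ, Real.exp (-(ω (n + 1))) * |iteratedDeriv k gau (y - (n + 1))| := by
  rw [← Real.norm_eq_abs, ← norm_iteratedFDeriv_eq_norm_iteratedDeriv]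
  have e : iteratedFDeriv ℝ k (testFun ω) y = ∑' n, iteratedFDeriv ℝ k (bump ω n) y :=
    iteratedFDeriv_tsum_apply (N := ⊤) (contDiff_bump ω)
      (fun _ _ => (summable_exp_half h).mul_right _)
      (fun k n y _ => norm_iteratedFDeriv_bump_le h n k y) le_top y
  have hs : Summable fun n => ‖iteratedFDeriv ℝ k (bump ω n) y‖ :=
    Summable.of_nonneg_of_le (fun _ => norm_nonneg _)
      (fun n => norm_iteratedFDeriv_bump_le h n k y) ((summable_exp_half h).mul_right _)
  rw [e]
  refine (norm_tsum_le_tsum_norm hs).trans (le_of_eq ?_)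
  exact tsum_congr fun n => norm_iteratedFDeriv_bump ω n k y

lemma exp_le_testFun {ω : ℝ → ℝ} (h : IsGenWeightFun ω) (n : ℕ) :
    Real.exp (-(ω (n + 1))) ≤ testFun ω (n + 1) := by
  have hs : Summable fun m => bump ω m ((n : ℝ) + 1) := by
    refine Summable.of_norm_bounded
      ((summable_exp_half h).mul_right (2 ^ 0 * Real.sqrt (Nat.factorial 0))) fun m => ?_
    rw [← norm_iteratedFDeriv_zero (𝕜 := ℝ)]
    exact norm_iteratedFDeriv_bump_le h m 0 _
  have h1 := hs.le_tsum n fun m _ => by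
    unfold bump gau
    positivity
  simpa [testFun, bump, gau] using h1

/-- `|x|ʲ` is split as `2ʲ (|x - n|ʲ + nʲ)`: the first part is absorbed by the Gaussian, the second
by the height `exp (-ω n)`, half of which is kept for summability. -/
lemma exists_testFun_bound {ω : ℝ → ℝ} (h : IsWeightFun ω) : ∃ l > 0, ∃ C > 0, ∀ (j k : ℕ) (x : ℝ),
    |x| ^ j * |iteratedDeriv k (testFun ω) x| ≤ C * wWeight ω l (j + k) := by
  obtain ⟨A, hA1, hA⟩ := exists_sqrt_factorial_le h
  have hg := h.toIsGenWeightFun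
  have hA' : ∀ k : ℕ, Real.sqrt k.factorial ≤ A * A ^ k * wWeight ω 2 k := fun k =>
    (hA k).trans (mul_le_mul_of_nonneg_left (wWeight_mono hg one_pos one_le_two k) (by positivity))
  obtain ⟨D, hD, l, hl, hDl⟩ := exists_pow_mul_wWeight_le hg (2 * A) (by positivity) two_pos
  set S := ∑' n : ℕ, Real.exp (-(ω (n + 1)) / 2) with hS
  have hS0 : 0 < S := (summable_exp_half hg).tsum_pos (fun _ => (Real.exp_pos _).le) 0
    (Real.exp_pos _)
  refine ⟨l, hl, S * (2 * A * D), by positivity, fun j k x => ?_⟩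
  have term : ∀ n : ℕ,
      |x| ^ j * (Real.exp (-(ω (n + 1))) * |iteratedDeriv k gau (x - (n + 1))|) ≤
        Real.exp (-(ω (n + 1)) / 2) * (2 * A * ((2 * A) ^ (j + k) * wWeight ω 2 (j + k))) := by
    intro n
    set N : ℝ := n + 1 with hN
    have hN1 : 1 ≤ N := by rw [hN]; linarith [n.cast_nonneg (α := ℝ)]
    set b := Real.exp (-(ω N) / 2) with hb
    have hb0 : 0 < b := Real.exp_pos _
    have hb1 : b ≤ 1 := Real.exp_le_one_iff.2 (by linarith [hg.nonneg N (by linarith)])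
    have hbb : Real.exp (-(ω N)) = b * b := by rw [hb, ← Real.exp_add]; ring_nf
    set G := |iteratedDeriv k gau (x - N)| with hG
    have hG0 : 0 ≤ G := abs_nonneg _
    have hx : |x| ^ j ≤ 2 ^ j * (|x - N| ^ j + N ^ j) := by
      have h1 : |x| ≤ 2 * max |x - N| N := by
        have : |x| ≤ |x - N| + |N| := by simpa using abs_add_le (x - N) N
        rw [abs_of_pos (by linarith : 0 < N)] at this
        linarith [le_max_left |x - N| N, le_max_right |x - N| N]
      have h2 : (max |x - N| N) ^ j ≤ |x - N| ^ j + N ^ j := by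
        rcases max_choice |x - N| N with e | e <;> rw [e]
        · linarith [pow_nonneg (by linarith : 0 ≤ N) j]
        · linarith [pow_nonneg (abs_nonneg (x - N)) j]
      calc |x| ^ j ≤ (2 * max |x - N| N) ^ j := by gcongr
        _ = 2 ^ j * (max |x - N| N) ^ j := mul_pow _ _ _
        _ ≤ _ := by gcongr
    have hW := wWeight_pos ω 2 (j + k)
    have hWk := wWeight_pos ω 2 k
    have hWj := wWeight_pos ω 2 j
    have p1 : b * (|x - N| ^ j * G) ≤ 2 ^ k * (A * A ^ (j + k) * wWeight ω 2 (j + k)) :=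
      calc b * (|x - N| ^ j * G) ≤ 1 * (2 ^ k * Real.sqrt (j + k).factorial) := by
            exact mul_le_mul hb1 (pow_mul_iteratedDeriv_gau_le k j _) (by positivity) zero_le_one
        _ ≤ _ := by rw [one_mul]; gcongr; exact hA' _
    have p2 : b * (N ^ j * G) ≤ 2 ^ k * (A * A ^ (j + k) * wWeight ω 2 (j + k)) :=
      calc b * (N ^ j * G) = (N ^ j * b) * G := by ring
        _ ≤ wWeight ω 2 j * (2 ^ k * (A * A ^ k * wWeight ω 2 k)) := by
            gcongr
            · exact le_wWeight hg two_pos j hN1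
            · have h1 := pow_mul_iteratedDeriv_gau_le k 0 (x - N)
              rw [pow_zero, one_mul, zero_add] at h1
              exact h1.trans (by gcongr; exact hA' k)
        _ = 2 ^ k * (A * A ^ k * (wWeight ω 2 j * wWeight ω 2 k)) := by ring
        _ ≤ _ := by
            gcongr
            · omega
            · exact wWeight_mul_le hg two_pos j k
    calc |x| ^ j * (Real.exp (-(ω N)) * G)
        ≤ (2 ^ j * (|x - N| ^ j + N ^ j)) * (Real.exp (-(ω N)) * G) := by gcongr
      _ = b * (2 ^ j * (b * (|x - N| ^ j * G) + b * (N ^ j * G))) := by rw [hbb]; ring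
      _ ≤ b * (2 ^ j * (2 ^ k * (A * A ^ (j + k) * wWeight ω 2 (j + k)) +
            2 ^ k * (A * A ^ (j + k) * wWeight ω 2 (j + k)))) := by gcongr
      _ = _ := by rw [mul_pow, pow_add 2]; ring
  have hsum := (summable_exp_half hg).mul_right
    (2 * A * ((2 * A) ^ (j + k) * wWeight ω 2 (j + k)))
  calc |x| ^ j * |iteratedDeriv k (testFun ω) x|
      ≤ |x| ^ j * ∑' n : ℕ, Real.exp (-(ω (n + 1))) * |iteratedDeriv k gau (x - (n + 1))| := by
        gcongr
        exact abs_iteratedDeriv_testFun_le hg k x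
    _ = ∑' n : ℕ, |x| ^ j * (Real.exp (-(ω (n + 1))) * |iteratedDeriv k gau (x - (n + 1))|) :=
        tsum_mul_left.symm
    _ ≤ ∑' n : ℕ, Real.exp (-(ω (n + 1)) / 2) *
          (2 * A * ((2 * A) ^ (j + k) * wWeight ω 2 (j + k))) :=
        Summable.tsum_le_tsum term
          (Summable.of_nonneg_of_le (fun n => by positivity) term hsum) hsum
    _ = S * (2 * A * ((2 * A) ^ (j + k) * wWeight ω 2 (j + k))) := tsum_mul_right
    _ ≤ S * (2 * A * (D * wWeight ω l (j + k))) := by have := hDl (j + k); gcongr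
    _ = _ := by ring

/-! ### Transfer to functions on `Fin 1 → ℝ` -/

lemma mderiv_fin_one {F : ℝ → ℝ} (hF : ContDiff ℝ (⊤ : ℕ∞) F) (β : Fin 1 → ℕ) :
    mderiv β (fun x : Fin 1 → ℝ => F (x 0)) = fun x => iteratedDeriv (β 0) F (x 0) := by
  have key : ∀ k : ℕ, (pderivOp (0 : Fin 1))^[k] (fun x : Fin 1 → ℝ => F (x 0)) =
      fun x => iteratedDeriv k F (x 0) := by
    intro k
    induction k with
    | zero => simp
    | succ k ih =>
      rw [Function.iterate_succ_apply', ih]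
      funext x
      have hd : DifferentiableAt ℝ (iteratedDeriv k F) (x 0) :=
        hF.differentiable_iteratedDeriv k (by exact_mod_cast ENat.natCast_lt_top k) _
      have hp : HasFDerivAt (fun x : Fin 1 → ℝ => x 0)
          (ContinuousLinearMap.proj (R := ℝ) (φ := fun _ : Fin 1 => ℝ) 0) x :=
        (ContinuousLinearMap.proj (R := ℝ) (φ := fun _ : Fin 1 => ℝ) 0).hasFDerivAt
      have := (hd.hasDerivAt.comp_hasFDerivAt x hp).fderiv
      unfold pderivOp
      rw [iteratedDeriv_succ]
      change fderiv ℝ (iteratedDeriv k F ∘ fun x : Fin 1 → ℝ => x 0) x _ = _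
      rw [this]
      simp
  simpa [mderiv, List.finRange_succ] using key (β 0)

lemma testFun_mem {ω : ℝ → ℝ} (h : IsWeightFun ω) :
    (fun x : Fin 1 → ℝ => testFun ω (x 0)) ∈ SRoumieuW ω 1 := by
  have hc := contDiff_testFun h.toIsGenWeightFun
  obtain ⟨l, hl, C, hC, H⟩ := exists_testFun_bound h
  refine ⟨hc.comp (contDiff_apply ℝ ℝ 0), l, hl, C, hC, fun α β x => ?_⟩
  rw [mderiv_fin_one hc]
  simpa [mpow, msize, abs_mul, abs_pow] using H (α 0) (β 0) (x 0)

/-! ### The converse implication -/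

/-- The supporting line of the convex function `t ↦ σ (exp t)` at `log x`. -/
lemma exists_support {σ : ℝ → ℝ} (h : IsGenWeightFun σ) {x : ℝ} (hx : 1 < x) :
    ∃ s ≥ 0, ∀ y, 1 ≤ y → σ x + s * (Real.log y - Real.log x) ≤ σ y := by
  have hx0 : 0 < x := by linarith
  have hlx : 0 < Real.log x := Real.log_pos hx
  have hint : Real.log x ∈ interior (Set.Ici (0 : ℝ)) := by simpa using hlx
  set f : ℝ → ℝ := fun t => σ (Real.exp t) with hf
  have hfx : f (Real.log x) = σ x := by simp [hf, Real.exp_log hx0]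
  set s := derivWithin f (Set.Ioi (Real.log x)) (Real.log x) with hs
  have key : ∀ u, 0 ≤ u → f (Real.log x) + s * (u - Real.log x) ≤ f u := by
    intro u hu
    rcases lt_trichotomy u (Real.log x) with hlt | heq | hgt
    · have h1 := (h.delta.slope_le_leftDeriv_of_mem_interior (Set.mem_Ici.2 hu) hint hlt).trans
        (h.delta.leftDeriv_le_rightDeriv_of_mem_interior hint)
      rw [slope_def_field, div_le_iff₀ (by linarith)] at h1
      linarith
    · simp [heq]
    · have h1 := h.delta.rightDeriv_le_slope_of_mem_interior hint (Set.mem_Ici.2 hu) hgt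
      rw [slope_def_field, le_div_iff₀ (by linarith)] at h1
      linarith
  refine ⟨s, ?_, fun y hy => ?_⟩
  · have h0 := key 0 le_rfl
    have h1 : f 0 ≤ f (Real.log x) := by
      rw [hfx]
      simp only [hf, Real.exp_zero]
      exact h.mono (Set.mem_Ici.2 zero_le_one) (Set.mem_Ici.2 hx0.le) hx.le
    by_contra! hneg
    nlinarith [mul_neg_of_neg_of_pos hneg hlx]
  · have := key (Real.log y) (Real.log_nonneg hy)
    rwa [hfx, show f (Real.log y) = σ y by simp [hf, Real.exp_log (by linarith : 0 < y)]] at this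

/-- Biconjugation, restricted to integer exponents, recovers `exp (-σ x / l)` from the weights up to
a factor `x`. -/
lemma exists_wWeight_le {σ : ℝ → ℝ} (h : IsGenWeightFun σ) {l : ℝ} (hl : 0 < l) {x : ℝ}
    (hx : 1 < x) : ∃ p : ℕ, wWeight σ l p ≤ x ^ (p + 1) * Real.exp (-(σ x) / l) := by
  have hx0 : 0 < x := by linarith
  obtain ⟨s, hs, H⟩ := exists_support h hx
  have hsl : 0 ≤ s / l := by positivity
  refine ⟨⌊s / l⌋₊, wWeight_le hl _ fun y hy => ?_⟩
  set p := ⌊s / l⌋₊ with hp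
  have hp1 : (p : ℝ) ≤ s / l := Nat.floor_le hsl
  have hp2 : s / l < p + 1 := Nat.lt_floor_add_one _
  have hy0 : 0 < y := by linarith
  have e : ∀ z : ℝ, 0 < z → ∀ m : ℕ, z ^ m = Real.exp (m * Real.log z) := fun z hz m => by
    rw [Real.exp_nat_mul, Real.exp_log hz]
  rw [e y hy0, e x hx0, ← Real.exp_add, ← Real.exp_add]
  apply Real.exp_le_exp.2
  have h1 := div_le_div_of_nonneg_right (H y hy) hl.le
  rw [add_div, mul_div_right_comm] at h1
  have hly := Real.log_nonneg hy
  have hlx := Real.log_nonneg hx.le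
  push_cast
  rw [neg_div, neg_div]
  nlinarith [mul_nonneg (sub_nonneg.2 hp1) hly, mul_nonneg (sub_nonneg.2 hp2.le) hlx]

lemma isBigO_of_subset {ω σ : ℝ → ℝ} (hω : IsWeightFun ω) (hσ : IsWeightFun σ)
    (hsub : SRoumieuW ω 1 ⊆ SRoumieuW σ 1) : σ =O[atTop] ω := by
  have hgω := hω.toIsGenWeightFun
  have hgσ := hσ.toIsGenWeightFun
  obtain ⟨-, l, hl, C, hC, H⟩ := hsub (testFun_mem hω)
  -- the decay of the test function at the integers
  have hint : ∀ n : ℕ, 1 ≤ n →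
      σ (n + 1) ≤ l * (ω (n + 1) + Real.log (n + 1) + Real.log C) := by
    intro n hn
    have hn1 : (1 : ℝ) ≤ n := by exact_mod_cast hn
    set N : ℝ := n + 1 with hN
    have hN0 : 0 < N := by positivity
    obtain ⟨p, hp⟩ := exists_wWeight_le hgσ hl (x := N) (by linarith)
    have h1 := H (fun _ => p) (fun _ => 0) (fun _ => N)
    rw [mderiv_fin_one (contDiff_testFun hgω)] at h1
    simp only [mpow, msize, Finset.univ_unique, Finset.prod_singleton, Finset.sum_singleton,
      iteratedDeriv_zero, add_zero] at h1
    have h2 : N ^ p * Real.exp (-(ω N)) ≤ N ^ p * (C * N * Real.exp (-(σ N) / l)) :=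
      calc N ^ p * Real.exp (-(ω N)) ≤ N ^ p * testFun ω N := by
            gcongr
            exact exp_le_testFun hgω n
        _ ≤ C * wWeight σ l p := (le_abs_self _).trans h1
        _ ≤ C * (N ^ (p + 1) * Real.exp (-(σ N) / l)) := by gcongr
        _ = _ := by ring
    have h3 := le_of_mul_le_mul_left h2 (by positivity)
    have h4 := Real.log_le_log (Real.exp_pos _) h3
    rw [Real.log_exp, Real.log_mul (by positivity) (by positivity),
      Real.log_mul (by positivity) (by positivity), Real.log_exp, neg_div] at h4
    have h5 : σ N / l ≤ ω N + Real.log N + Real.log C := by linarith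
    rw [div_le_iff₀ hl] at h5
    linarith
  obtain ⟨L, hL1, hL⟩ := hgω.alpha
  have hγ := hgω.gamma.def one_pos
  -- `ω ≥ log` eventually, so all additive constants are eventually at most `ω`
  have hbig : ∀ᶠ t in atTop, max (Real.log C) 1 ≤ Real.log t :=
    Real.tendsto_log_atTop.eventually_ge_atTop _
  obtain ⟨T, hT⟩ := eventually_atTop.1 (hγ.and hbig)
  refine IsBigO.of_bound (l * (3 * (2 * L))) ?_
  filter_upwards [eventually_ge_atTop (max T 2)] with t ht
  have ht2 : 2 ≤ t := (le_max_right _ _).trans ht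
  have htT : T ≤ t := (le_max_left _ _).trans ht
  have hωt := hgω.nonneg t (by linarith)
  rw [Real.norm_of_nonneg (hgσ.nonneg t (by linarith)), Real.norm_of_nonneg hωt]
  set n := ⌊t⌋₊ with hn
  have hnt : (n : ℝ) ≤ t := Nat.floor_le (by linarith)
  have htn : t ≤ n + 1 := (Nat.lt_floor_add_one t).le
  have hn1 : 1 ≤ n := Nat.le_floor (by push_cast; linarith)
  have habs : ∀ u, T ≤ u → 2 ≤ u → Real.log u ≤ ω u ∧ max (Real.log C) 1 ≤ Real.log u := by
    intro u hu hu2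
    obtain ⟨h1, h2⟩ := hT u hu
    rw [one_mul, Real.norm_of_nonneg (hgω.nonneg u (by linarith))] at h1
    exact ⟨(le_abs_self _).trans h1, h2⟩
  obtain ⟨a1, a2⟩ := habs ((n : ℝ) + 1) (htT.trans htn) (ht2.trans htn)
  obtain ⟨b1, b2⟩ := habs t htT ht2
  have hC' := (le_max_left (Real.log C) 1).trans a2
  have hone := (le_max_right (Real.log C) 1).trans b2
  have hm1 : σ t ≤ σ (n + 1) := hgσ.mono (Set.mem_Ici.2 (by linarith))
    (Set.mem_Ici.2 (by positivity)) htn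
  have hm2 : ω (n + 1) ≤ ω (2 * t) := hgω.mono (Set.mem_Ici.2 (by positivity))
    (Set.mem_Ici.2 (by linarith)) (by linarith)
  have hm3 : ω (2 * t) ≤ 2 * L * ω t := by
    refine (hL t (by linarith)).trans ?_
    nlinarith
  calc σ t ≤ l * (ω (n + 1) + Real.log (n + 1) + Real.log C) := hm1.trans (hint n hn1)
    _ ≤ l * (3 * (2 * L * ω t)) := by
        gcongr
        linarith
    _ = _ := by ring

/-- Theorem 4.1 / `Gelfand-inclusion3new`: for weight functions `ω, σ`,
`σ(t) = O(ω(t))` iff `S_{{ω}}(ℝ^d) ⊆ S_{{σ}}(ℝ^d)` for all dimensions `d`; the forward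
implication holds for general weight functions, the converse needs only dimension `d = 1`. -/
theorem roumieu_inclusion_characterization_weight_functions (ω σ : ℝ → ℝ) :
    ((IsGenWeightFun ω ∧ IsGenWeightFun σ ∧ σ =O[Filter.atTop] ω) →
      ∀ d : ℕ, 0 < d → SRoumieuW ω d ⊆ SRoumieuW σ d) ∧
    ((IsWeightFun ω ∧ IsWeightFun σ ∧ SRoumieuW ω 1 ⊆ SRoumieuW σ 1) →
      σ =O[Filter.atTop] ω) ∧
    (IsWeightFun ω → IsWeightFun σ →
      (σ =O[Filter.atTop] ω ↔ ∀ d : ℕ, 0 < d → SRoumieuW ω d ⊆ SRoumieuW σ d)) := by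
  refine ⟨fun ⟨hω, hσ, hO⟩ d _ => sRoumieuW_subset hω hσ hO d,
    fun ⟨hω, hσ, hsub⟩ => isBigO_of_subset hω hσ hsub, fun hω hσ => ⟨fun hO d _ => ?_, fun h => ?_⟩⟩
  · exact sRoumieuW_subset hω.toIsGenWeightFun hσ.toIsGenWeightFun hO d
  · exact isBigO_of_subset hω hσ (h 1 one_pos)
end

section
/- Let M=(M_p)_{p∈ℕ_0} and N=(N_p)_{p∈ℕ_0} be sequences in LC which both satisfy derivation closedness (M2'), and assume M satisfies the single-sequence condition (12L2R) while N satisfies the single-sequence condition (12L2B). Then M◁N if and only if S_{{M}}(ℝ^d) ⊆ S_{(N)}(ℝ^d) for all dimensions d∈ℕ. The implication from M◁N to the inclusions holds for arbitrary sequences of positive reals, and for the converse only the inclusion in dimension d=1 is required. -/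
/-!
`M ◁ N` means that for every `h > 0` there is `C` with `M_p ≤ C h^p N_p` for all `p`
(`seqLtriangle_iff`). Inserting this into the defining bound of the Roumieu class gives the
inclusions at once, for arbitrary positive sequences.

For the converse, one function in the Roumieu class on the line suffices, provided the
values `t^n f(t)` get as large as `M` allows. Put `μ_n = M_{n+1} / M_n` and let `g` be the standard Gaussian; take

  `f(t) = ∑ₙ 2⁻ⁿ (M_n / μ_n^n) g(t - μ_n)`.

Log-convexity says that `q ↦ M_q / μ_n^q` is minimal at `q = n` (`logConvex_min`), so that
`(M_n / μ_n^n) μ_n^q ≤ M_q` for all `q`. Splitting `|t|^a` into `|t - μ_n|^a` and `μ_n^a` and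
using `|y^a g^{(b)}(y)| ≤ 2^b (a+b)^{(a+b)/2}` (`abs_pow_mul_iteratedDeriv_gaussFn_le`), the
quantity `|t^a f^{(b)}(t)|` is bounded by a geometric multiple of
`(a+b)^{(a+b)/2} M_0 + b^{b/2} M_a`, which (12L2R) bounds by a geometric multiple of `M_{a+b}`.
Hence `f` lies in the Roumieu class (`extremalFn_mem_roumieu`). All summands being nonnegative,
`μ_n^n f(μ_n) ≥ 2⁻ⁿ M_n` (`le_pow_mul_extremalFn`), so membership of `f` in the Beurling class
of `N` forces `2⁻ⁿ M_n ≤ C h^n N_n` for every `h > 0`, which is `M ◁ N`.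
-/

open Filter Asymptotics

/-! ### Derivatives of the Gaussian -/

/-- The standard Gaussian `exp (-y²/2)`. -/
noncomputable def gaussFn (y : ℝ) : ℝ := Real.exp (-(y ^ 2 / 2))

lemma contDiff_gaussFn {n : WithTop ℕ∞} : ContDiff ℝ n gaussFn := by
  unfold gaussFn
  fun_prop

lemma hasDerivAt_iteratedDeriv_gaussFn (b : ℕ) (y : ℝ) :
    HasDerivAt (iteratedDeriv b gaussFn) (iteratedDeriv (b + 1) gaussFn y) y := by
  rw [iteratedDeriv_succ]
  have h : Differentiable ℝ (iteratedDeriv b gaussFn) :=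
    (contDiff_gaussFn (n := ((b + 1 : ℕ) : WithTop ℕ∞))).differentiable_iteratedDeriv b
      (by exact_mod_cast Nat.lt_succ_self b)
  exact (h y).hasDerivAt

lemma iteratedDeriv_one_gaussFn (y : ℝ) :
    iteratedDeriv 1 gaussFn y = -y * iteratedDeriv 0 gaussFn y := by
  rw [iteratedDeriv_one, iteratedDeriv_zero]
  have h : HasDerivAt (fun y : ℝ => -(y ^ 2 / 2)) (-y) y := by
    exact ((hasDerivAt_pow 2 y).div_const 2).neg.congr_deriv (by norm_num)
  have h2 := h.exp.deriv
  unfold gaussFn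
  rw [h2]
  ring

/-- The three-term recurrence obtained by differentiating `g' = -y g`, where `g` is the
Gaussian. -/
lemma iteratedDeriv_gaussFn_rec (b : ℕ) (y : ℝ) :
    iteratedDeriv (b + 2) gaussFn y =
      -y * iteratedDeriv (b + 1) gaussFn y - (b + 1) * iteratedDeriv b gaussFn y := by
  induction b generalizing y with
  | zero =>
    have h1 := hasDerivAt_iteratedDeriv_gaussFn 1 y
    have h2 := (hasDerivAt_id y).neg.mul (hasDerivAt_iteratedDeriv_gaussFn 0 y)
    have h3 : iteratedDeriv 1 gaussFn = (-id) * iteratedDeriv 0 gaussFn := by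
      funext z
      simpa using iteratedDeriv_one_gaussFn z
    rw [h3] at h1
    have h4 := h1.unique h2
    simp only [Pi.neg_apply, id_eq, zero_add] at h4 ⊢
    rw [h4]
    push_cast
    ring
  | succ b ih =>
    have h1 := hasDerivAt_iteratedDeriv_gaussFn (b + 2) y
    have h2 := ((hasDerivAt_id y).neg.mul (hasDerivAt_iteratedDeriv_gaussFn (b + 1) y)).sub
      ((hasDerivAt_iteratedDeriv_gaussFn b y).const_mul ((b : ℝ) + 1))
    have h3 : iteratedDeriv (b + 2) gaussFn =
        (-id) * iteratedDeriv (b + 1) gaussFn -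
          fun z => ((b : ℝ) + 1) * iteratedDeriv b gaussFn z := by
      funext z
      simpa using ih z
    rw [h3] at h1
    have h4 := h1.unique h2
    simp only [Pi.neg_apply, id_eq] at h4 ⊢
    rw [h4]
    push_cast
    ring

lemma abs_pow_mul_gaussFn_le (k : ℕ) (y : ℝ) :
    |y| ^ k * gaussFn y ≤ √(k : ℝ) ^ k := by
  rcases Nat.eq_zero_or_pos k with rfl | hk
  · simp only [pow_zero, one_mul, gaussFn, Real.exp_le_one_iff]
    nlinarith [sq_nonneg y]
  have hk' : (0 : ℝ) < k := by exact_mod_cast hk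
  -- The elementary inequality `u ≤ exp u` at `u = y² / k`, followed by a square root.
  have h1 : |y| ≤ √(k : ℝ) * Real.exp (y ^ 2 / (2 * k)) := by
    refine abs_le_of_sq_le_sq ?_ (by positivity)
    rw [mul_pow, Real.sq_sqrt hk'.le, ← Real.exp_nat_mul]
    have h2 : y ^ 2 / k ≤ Real.exp (y ^ 2 / k) := by
      linarith [Real.add_one_le_exp (y ^ 2 / k)]
    have h3 : ((2 : ℕ) : ℝ) * (y ^ 2 / (2 * k)) = y ^ 2 / k := by
      push_cast
      field_simp
    rw [h3]
    rw [div_le_iff₀ hk'] at h2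
    linarith
  have h2 : |y| ^ k ≤ √(k : ℝ) ^ k * Real.exp (y ^ 2 / 2) := by
    calc |y| ^ k ≤ (√(k : ℝ) * Real.exp (y ^ 2 / (2 * k))) ^ k := by gcongr
      _ = _ := by
        rw [mul_pow, ← Real.exp_nat_mul]
        congr 2
        field_simp
  calc |y| ^ k * gaussFn y ≤ (√(k : ℝ) ^ k * Real.exp (y ^ 2 / 2)) * gaussFn y := by
        gcongr
        exact (Real.exp_pos _).le
    _ = _ := by
        rw [gaussFn, mul_assoc, ← Real.exp_add]
        simp

lemma sqrt_pow_rec (k : ℕ) :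
    ((k : ℝ) + 1) * √(k : ℝ) ^ k ≤ √((k + 2 : ℕ) : ℝ) ^ (k + 2) := by
  rw [pow_add, Real.sq_sqrt (by positivity), mul_comm]
  have : √(k : ℝ) ≤ √((k + 2 : ℕ) : ℝ) := Real.sqrt_le_sqrt (by push_cast; linarith)
  gcongr
  push_cast
  linarith

/-- Induction on `b` along the recurrence for the derivatives: the right-hand side is stable
because `(k + 1) √k ^ k ≤ √(k + 2) ^ (k + 2)`. -/
lemma abs_pow_mul_iteratedDeriv_gaussFn_le (b : ℕ) : ∀ (a : ℕ) (y : ℝ),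
    |y| ^ a * |iteratedDeriv b gaussFn y| ≤ 2 ^ b * √((a + b : ℕ) : ℝ) ^ (a + b) := by
  induction b using Nat.strong_induction_on with
  | _ b ih =>
    intro a y
    match b, ih with
    | 0, _ =>
      rw [iteratedDeriv_zero, abs_of_pos (show 0 < gaussFn y from Real.exp_pos _)]
      simpa using abs_pow_mul_gaussFn_le a y
    | 1, ih =>
      have h := ih 0 (by norm_num) (a + 1) y
      rw [iteratedDeriv_one_gaussFn, abs_mul, abs_neg, ← mul_assoc, ← pow_succ]
      refine h.trans ?_
      simp only [add_zero]
      gcongr <;> norm_num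
    | b + 2, ih =>
      have h1 := ih (b + 1) (by omega) (a + 1) y
      have h2 := ih b (by omega) a y
      have h3 := sqrt_pow_rec (a + b)
      rw [iteratedDeriv_gaussFn_rec]
      have e1 : a + 1 + (b + 1) = a + (b + 2) := by ring
      have e2 : a + b + 2 = a + (b + 2) := by ring
      rw [e1] at h1
      rw [e2] at h3
      set V := √((a + (b + 2) : ℕ) : ℝ) ^ (a + (b + 2))
      set U := √((a + b : ℕ) : ℝ) ^ (a + b)
      have hU : 0 ≤ U := by positivity
      have hb : ((b : ℝ) + 1) * U ≤ V := by
        refine le_trans ?_ h3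
        gcongr
        linarith [Nat.cast_nonneg (α := ℝ) a]
      have hV : 0 ≤ V := by positivity
      calc |y| ^ a * |-y * iteratedDeriv (b + 1) gaussFn y - (b + 1) * iteratedDeriv b gaussFn y|
          ≤ |y| ^ a * (|y| * |iteratedDeriv (b + 1) gaussFn y|
              + (b + 1) * |iteratedDeriv b gaussFn y|) := by
            gcongr
            refine (abs_sub _ _).trans_eq ?_
            rw [abs_mul, abs_mul, abs_neg, abs_of_nonneg (by positivity : (0 : ℝ) ≤ b + 1)]
        _ = |y| ^ (a + 1) * |iteratedDeriv (b + 1) gaussFn y|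
              + (b + 1) * (|y| ^ a * |iteratedDeriv b gaussFn y|) := by ring
        _ ≤ 2 ^ (b + 1) * V + (b + 1) * (2 ^ b * U) := by gcongr
        _ = 2 ^ (b + 1) * V + 2 ^ b * ((b + 1) * U) := by ring
        _ ≤ 2 ^ (b + 1) * V + 2 ^ b * V := by gcongr
        _ ≤ 2 ^ (b + 2) * V := by
            have : (0 : ℝ) ≤ 2 ^ b * V := by positivity
            rw [pow_succ, pow_succ, pow_succ]
            linarith

lemma sqrt_pow_eq_rpow (k : ℕ) : √(k : ℝ) ^ k = (k : ℝ) ^ ((k : ℝ) / 2) := by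
  rw [Real.sqrt_eq_rpow, ← Real.rpow_natCast, ← Real.rpow_mul (Nat.cast_nonneg k)]
  congr 1
  ring

/-! ### Log-convex sequences -/

/-- For log-convex `M` with quotients `μ_n = M_{n+1} / M_n`, the infimum over `q` of
`M_q / μ_n ^ q` is attained at `q = n`. -/
lemma logConvex_min {M : ℕ → ℝ} (hpos : ∀ p, 0 < M p)
    (hlc : ∀ p : ℕ, M (p + 1) ^ 2 ≤ M p * M (p + 2)) (n q : ℕ) :
    M n / (M (n + 1) / M n) ^ n * (M (n + 1) / M n) ^ q ≤ M q := by
  have hr : ∀ k, 0 < M (k + 1) / M k := fun k => div_pos (hpos _) (hpos _)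
  have hmono : Monotone fun k => M (k + 1) / M k := by
    refine monotone_nat_of_le_succ fun k => ?_
    rw [div_le_div_iff₀ (hpos _) (hpos _)]
    nlinarith [hlc k]
  have hstep : ∀ k, M (k + 1) = M k * (M (k + 1) / M k) := fun k => by
    field_simp [(hpos k).ne']
  set r := M (n + 1) / M n
  have hr0 : 0 < r := hr n
  rw [div_mul_eq_mul_div, div_le_iff₀ (by positivity)]
  rcases le_total n q with h | h
  · obtain ⟨j, rfl⟩ := Nat.exists_eq_add_of_le h
    have : M n * r ^ j ≤ M (n + j) := by
      clear h
      induction j with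
      | zero => simp
      | succ j ih =>
        rw [← add_assoc, hstep (n + j), pow_succ, ← mul_assoc]
        have h1 : r ≤ M (n + j + 1) / M (n + j) := hmono (Nat.le_add_right n j)
        have := (hpos (n + j)).le
        gcongr
    calc M n * r ^ (n + j) = M n * r ^ j * r ^ n := by ring
      _ ≤ _ := by gcongr
  · obtain ⟨j, hj⟩ := Nat.exists_eq_add_of_le h
    have : ∀ i, q + i ≤ n → M (q + i) ≤ M q * r ^ i := by
      intro i
      induction i with
      | zero => simp
      | succ i ih =>
        intro hi
        rw [← add_assoc, hstep (q + i), pow_succ, ← mul_assoc]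
        have h1 : M (q + i + 1) / M (q + i) ≤ r := hmono (by omega)
        have h2 := ih (by omega)
        have := (hpos q).le
        have := (hr (q + i)).le
        gcongr
    have h2 := this j (by omega)
    rw [← hj] at h2
    calc M n * r ^ q ≤ M q * r ^ j * r ^ q := by gcongr
      _ = M q * r ^ n := by rw [hj]; ring

lemma seqLtriangle_iff {M N : ℕ → ℝ} (hM : ∀ p, 0 < M p) (hN : ∀ p, 0 < N p) :
    seqLtriangle M N ↔ ∀ h > 0, ∃ C > 0, ∀ p, M p ≤ C * h ^ p * N p := by
  have hq : ∀ p, 0 < M p / N p := fun p => div_pos (hM p) (hN p)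
  constructor
  · intro H h hh
    have h1 : ∀ᶠ p : ℕ in atTop, M p / N p ≤ h ^ p := by
      filter_upwards [H.eventually (gt_mem_nhds hh), eventually_ge_atTop 1] with p hp hp1
      have : M p / N p = ((M p / N p) ^ (1 / (p : ℝ))) ^ p := by
        rw [one_div, Real.rpow_inv_natCast_pow (hq p).le (by omega)]
      rw [this]
      have := Real.rpow_nonneg (hq p).le (1 / (p : ℝ))
      gcongr
    obtain ⟨P, hP⟩ := eventually_atTop.1 h1
    refine ⟨1 + ∑ i ∈ Finset.range P, M i / N i / h ^ i, ?_, fun p => ?_⟩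
    · have : 0 ≤ ∑ i ∈ Finset.range P, M i / N i / h ^ i :=
        Finset.sum_nonneg fun i _ => by have := (hq i).le; positivity
      linarith
    · have hnn : ∀ i ∈ Finset.range P, 0 ≤ M i / N i / h ^ i :=
        fun i _ => by have := (hq i).le; positivity
      rw [← div_le_iff₀ (hN p), ← div_le_iff₀ (by positivity)]
      by_cases hp : P ≤ p
      · have : M p / N p / h ^ p ≤ 1 := by
          rw [div_le_one (by positivity)]
          exact hP p hp
        linarith [Finset.sum_nonneg hnn]
      · have := Finset.single_le_sum hnn (Finset.mem_range.2 (not_le.1 hp))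
        linarith
  · intro H
    unfold seqLtriangle
    rw [Metric.tendsto_atTop']
    intro ε hε
    obtain ⟨C, hC, hb⟩ := H (ε / 4) (by positivity)
    have h1 : Tendsto (fun p : ℕ => C ^ (1 / (p : ℝ))) atTop (nhds 1) := by
      have := (Real.continuousAt_const_rpow hC.ne' (b := 0)).tendsto.comp
        (tendsto_one_div_atTop_nhds_zero_nat (𝕜 := ℝ))
      simpa [Function.comp_def] using this
    obtain ⟨P, hP⟩ := eventually_atTop.1
      (h1.eventually (gt_mem_nhds (show (1 : ℝ) < 2 by norm_num)))
    refine ⟨P, fun p hp => ?_⟩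
    have h2 := hP p hp.le
    have hp0 : p ≠ 0 := by omega
    have h3 : M p / N p ≤ C * (ε / 4) ^ p := by
      rw [div_le_iff₀ (hN p)]
      exact hb p
    have h4 : (M p / N p) ^ (1 / (p : ℝ)) ≤ C ^ (1 / (p : ℝ)) * (ε / 4) := by
      calc (M p / N p) ^ (1 / (p : ℝ)) ≤ (C * (ε / 4) ^ p) ^ (1 / (p : ℝ)) :=
            Real.rpow_le_rpow (hq p).le h3 (by positivity)
        _ = _ := by
            rw [Real.mul_rpow hC.le (by positivity), one_div,
              Real.pow_rpow_inv_natCast (by positivity) hp0]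
    have h5 := Real.rpow_nonneg (hq p).le (1 / (p : ℝ))
    rw [Real.dist_eq, sub_zero, abs_of_nonneg h5]
    calc _ ≤ _ := h4
      _ ≤ 2 * (ε / 4) := by gcongr
      _ < ε := by linarith

lemma roumieu_subset_beurling {M N : ℕ → ℝ} (hM : ∀ p, 0 < M p) (hN : ∀ p, 0 < N p)
    (H : seqLtriangle M N) (d : ℕ) : SRoumieuSeq M d ⊆ SBeurlingSeq N d := by
  rintro f ⟨hf, C, hC, h₀, hh₀, hb⟩
  refine ⟨hf, fun h hh => ?_⟩
  obtain ⟨C', hC', hb'⟩ := (seqLtriangle_iff hM hN).1 H (h / h₀) (by positivity)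
  refine ⟨C * C', by positivity, fun α β x => (hb α β x).trans ?_⟩
  set k := msize α + msize β
  calc C * h₀ ^ k * M k ≤ C * h₀ ^ k * (C' * (h / h₀) ^ k * N k) := by
        gcongr
        exact hb' k
    _ = C * C' * h ^ k * N k := by
        rw [div_pow]
        field_simp

/-! ### Functions on `Fin 1 → ℝ` -/

lemma iterate_pderivOp_one {g : ℝ → ℝ} (hg : ContDiff ℝ (⊤ : ℕ∞) g) (b : ℕ) :
    (pderivOp (0 : Fin 1))^[b] (fun x => g (x 0)) = fun x => iteratedDeriv b g (x 0) := by
  induction b with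
  | zero => simp
  | succ b ih =>
    rw [Function.iterate_succ_apply', ih]
    funext x
    have hd : Differentiable ℝ (iteratedDeriv b g) :=
      hg.differentiable_iteratedDeriv b (by exact_mod_cast WithTop.coe_lt_top b)
    have h1 : HasFDerivAt (fun x : Fin 1 → ℝ => x 0)
        (ContinuousLinearMap.proj (R := ℝ) (φ := fun _ : Fin 1 => ℝ) 0) x :=
      hasFDerivAt_apply 0 x
    have h2 := (hd (x 0)).hasDerivAt.comp_hasFDerivAt x h1
    have h3 : pderivOp (0 : Fin 1) (fun x => iteratedDeriv b g (x 0)) x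
        = fderiv ℝ (iteratedDeriv b g ∘ fun x : Fin 1 → ℝ => x 0) x (Pi.single 0 1) := rfl
    rw [h3, h2.fderiv, iteratedDeriv_succ]
    simp

lemma mderiv_one {g : ℝ → ℝ} (hg : ContDiff ℝ (⊤ : ℕ∞) g) (β : Fin 1 → ℕ) :
    mderiv β (fun x => g (x 0)) = fun x => iteratedDeriv (β 0) g (x 0) := by
  rw [← iterate_pderivOp_one hg]
  simp [mderiv, List.finRange_succ]

/-! ### The extremal function -/

/-- The `n`-th summand of the extremal function: a Gaussian centred at the quotient
`μ_n = M_{n+1} / M_n` with weight `2⁻ⁿ M_n / μ_n ^ n`. -/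
noncomputable def bumpFn (M : ℕ → ℝ) (n : ℕ) (t : ℝ) : ℝ :=
  (1 / 2) ^ n * (M n / (M (n + 1) / M n) ^ n) * gaussFn (t - M (n + 1) / M n)

/-- A superposition of Gaussians whose product with `t ^ n` is at least `2⁻ⁿ M_n` at
`t = M_{n+1} / M_n`, for every `n`. -/
noncomputable def extremalFn (M : ℕ → ℝ) (t : ℝ) : ℝ := ∑' n, bumpFn M n t

lemma contDiff_bumpFn (M : ℕ → ℝ) (n : ℕ) {m : WithTop ℕ∞} : ContDiff ℝ m (bumpFn M n) := by
  unfold bumpFn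
  exact contDiff_const.mul (contDiff_gaussFn.comp (contDiff_id.sub contDiff_const))

lemma iteratedDeriv_bumpFn (M : ℕ → ℝ) (n b : ℕ) (t : ℝ) :
    iteratedDeriv b (bumpFn M n) t = (1 / 2) ^ n * (M n / (M (n + 1) / M n) ^ n) *
      iteratedDeriv b gaussFn (t - M (n + 1) / M n) := by
  unfold bumpFn
  rw [iteratedDeriv_const_mul_field,
    iteratedDeriv_comp_sub_const]

/-- With `|t| ^ a ≤ 2 ^ a (|t - μ_n| ^ a + μ_n ^ a)`, the first part is controlled by the
Gaussian alone and the second one by the minimality of the weight. -/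
lemma abs_pow_mul_bumpFn_le {M : ℕ → ℝ} (hpos : ∀ p, 0 < M p) (h0 : M 0 = 1)
    (hlc : ∀ p : ℕ, M (p + 1) ^ 2 ≤ M p * M (p + 2)) (n a b : ℕ) (t : ℝ) :
    |t| ^ a * |iteratedDeriv b (bumpFn M n) t| ≤
      (1 / 2) ^ n * (2 ^ (a + b) *
        (√((a + b : ℕ) : ℝ) ^ (a + b) + √(b : ℝ) ^ b * M a)) := by
  have hmin := logConvex_min hpos hlc n
  have hr : 0 < M (n + 1) / M n := div_pos (hpos _) (hpos _)
  rw [iteratedDeriv_bumpFn]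
  set r := M (n + 1) / M n
  have hA : 0 < M n / r ^ n := div_pos (hpos n) (by positivity)
  set A := M n / r ^ n
  have hA1 : A ≤ 1 := by simpa [h0] using hmin 0
  have hAa : A * r ^ a ≤ M a := hmin a
  have g1 := abs_pow_mul_iteratedDeriv_gaussFn_le b a (t - r)
  have g2 := abs_pow_mul_iteratedDeriv_gaussFn_le b 0 (t - r)
  simp only [pow_zero, one_mul, zero_add] at g2
  have hsplit : |t| ^ a ≤ 2 ^ a * (|t - r| ^ a + r ^ a) := by
    have h1 : |t| ≤ 2 * max |t - r| r := by
      have h2 : |t| ≤ |t - r| + |r| := by simpa using abs_add_le (t - r) r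
      rw [abs_of_pos hr] at h2
      linarith [le_max_left |t - r| r, le_max_right |t - r| r]
    calc |t| ^ a ≤ (2 * max |t - r| r) ^ a := by gcongr
      _ = 2 ^ a * (max |t - r| r) ^ a := mul_pow _ _ _
      _ ≤ _ := by
        gcongr
        rcases max_choice |t - r| r with h | h <;> rw [h]
        · linarith [pow_nonneg hr.le a]
        · linarith [pow_nonneg (abs_nonneg (t - r)) a]
  rw [abs_mul, abs_of_pos (by positivity : 0 < (1 / 2 : ℝ) ^ n * A)]
  set G := |iteratedDeriv b gaussFn (t - r)|
  have hG : 0 ≤ G := abs_nonneg _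
  set V := √((a + b : ℕ) : ℝ) ^ (a + b)
  set W := √(b : ℝ) ^ b
  have hV : 0 ≤ V := by positivity
  have hW : 0 ≤ W := by positivity
  have hMa := (hpos a).le
  calc |t| ^ a * ((1 / 2) ^ n * A * G)
      ≤ (2 ^ a * (|t - r| ^ a + r ^ a)) * ((1 / 2) ^ n * A * G) := by gcongr
    _ = (1 / 2) ^ n * (2 ^ a * (A * (|t - r| ^ a * G) + (A * r ^ a) * G)) := by ring
    _ ≤ (1 / 2) ^ n * (2 ^ a * (1 * (2 ^ b * V) + M a * (2 ^ b * W))) := by gcongr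
    _ = _ := by ring

lemma summable_half_mul (c : ℝ) : Summable fun n : ℕ => (1 / 2 : ℝ) ^ n * c :=
  (summable_geometric_of_lt_one (by norm_num) (by norm_num)).mul_right c

lemma norm_iteratedFDeriv_bumpFn_le {M : ℕ → ℝ} (hpos : ∀ p, 0 < M p) (h0 : M 0 = 1)
    (hlc : ∀ p : ℕ, M (p + 1) ^ 2 ≤ M p * M (p + 2)) (b n : ℕ) (t : ℝ) :
    ‖iteratedFDeriv ℝ b (bumpFn M n) t‖ ≤
      (1 / 2) ^ n * (2 ^ b * (√(b : ℝ) ^ b + √(b : ℝ) ^ b * M 0)) := by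
  rw [norm_iteratedFDeriv_eq_norm_iteratedDeriv, Real.norm_eq_abs]
  simpa using abs_pow_mul_bumpFn_le hpos h0 hlc n 0 b t

lemma contDiff_extremalFn {M : ℕ → ℝ} (hpos : ∀ p, 0 < M p) (h0 : M 0 = 1)
    (hlc : ∀ p : ℕ, M (p + 1) ^ 2 ≤ M p * M (p + 2)) : ContDiff ℝ (⊤ : ℕ∞) (extremalFn M) := by
  unfold extremalFn
  exact contDiff_tsum (fun n => contDiff_bumpFn M n) (fun k _ => summable_half_mul _)
    (fun k n x _ => norm_iteratedFDeriv_bumpFn_le hpos h0 hlc k n x)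

lemma iteratedDeriv_extremalFn {M : ℕ → ℝ} (hpos : ∀ p, 0 < M p) (h0 : M 0 = 1)
    (hlc : ∀ p : ℕ, M (p + 1) ^ 2 ≤ M p * M (p + 2)) (b : ℕ) (t : ℝ) :
    iteratedDeriv b (extremalFn M) t = ∑' n, iteratedDeriv b (bumpFn M n) t := by
  unfold extremalFn
  have hs : ∀ k : ℕ, Summable fun n => (1 / 2 : ℝ) ^ n *
      (2 ^ k * (√(k : ℝ) ^ k + √(k : ℝ) ^ k * M 0)) := fun k => summable_half_mul _
  rw [iteratedDeriv_eq_iteratedFDeriv,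
    iteratedFDeriv_tsum_apply (N := (⊤ : ℕ∞)) (fun n => contDiff_bumpFn M n) (fun k _ => hs k)
      (fun k n x _ => norm_iteratedFDeriv_bumpFn_le hpos h0 hlc k n x) le_top]
  rw [ContinuousMultilinearMap.tsum_eval]
  · simp only [iteratedDeriv_eq_iteratedFDeriv]
  · exact Summable.of_norm_bounded (hs b)
      fun n => norm_iteratedFDeriv_bumpFn_le hpos h0 hlc b n t

lemma abs_pow_mul_extremalFn_le {M : ℕ → ℝ} (hpos : ∀ p, 0 < M p) (h0 : M 0 = 1)
    (hlc : ∀ p : ℕ, M (p + 1) ^ 2 ≤ M p * M (p + 2)) (a b : ℕ) (t : ℝ) :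
    |t ^ a * iteratedDeriv b (extremalFn M) t| ≤
      2 * (2 ^ (a + b) * (√((a + b : ℕ) : ℝ) ^ (a + b) + √(b : ℝ) ^ b * M a)) := by
  rw [iteratedDeriv_extremalFn hpos h0 hlc, ← tsum_mul_left, ← Real.norm_eq_abs]
  refine tsum_of_norm_bounded (hasSum_geometric_two.mul_right _) fun n => ?_
  rw [Real.norm_eq_abs, abs_mul, abs_pow]
  exact abs_pow_mul_bumpFn_le hpos h0 hlc n a b t

lemma le_pow_mul_extremalFn {M : ℕ → ℝ} (hpos : ∀ p, 0 < M p) (h0 : M 0 = 1)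
    (hlc : ∀ p : ℕ, M (p + 1) ^ 2 ≤ M p * M (p + 2)) (n : ℕ) :
    (1 / 2) ^ n * M n ≤ (M (n + 1) / M n) ^ n * extremalFn M (M (n + 1) / M n) := by
  have hr : 0 < M (n + 1) / M n := div_pos (hpos _) (hpos _)
  have hnn : ∀ m t, 0 ≤ bumpFn M m t := fun m t => by
    have h1 := hpos m
    have h2 := hpos (m + 1)
    have h3 : 0 < gaussFn (t - M (m + 1) / M m) := Real.exp_pos _
    unfold bumpFn
    positivity
  have hsum : Summable fun m => bumpFn M m (M (n + 1) / M n) := by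
    refine Summable.of_norm_bounded (summable_half_mul
      (2 ^ (0 + 0) * (√((0 + 0 : ℕ) : ℝ) ^ (0 + 0) + √((0 : ℕ) : ℝ) ^ 0 * M 0))) fun m => ?_
    have := abs_pow_mul_bumpFn_le hpos h0 hlc m 0 0 (M (n + 1) / M n)
    rwa [pow_zero, one_mul, iteratedDeriv_zero] at this
  have h1 : bumpFn M n (M (n + 1) / M n) ≤ extremalFn M (M (n + 1) / M n) :=
    hsum.le_tsum n fun m _ => hnn m _
  have h2 : (M (n + 1) / M n) ^ n * bumpFn M n (M (n + 1) / M n) = (1 / 2) ^ n * M n := by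
    unfold bumpFn gaussFn
    set r := M (n + 1) / M n
    simp only [sub_self, ne_eq, OfNat.ofNat_ne_zero, not_false_eq_true, zero_pow, zero_div,
      neg_zero, Real.exp_zero, mul_one]
    field_simp
  rw [← h2]
  gcongr

lemma extremalFn_mem_roumieu {M : ℕ → ℝ} (hpos : ∀ p, 0 < M p) (h0 : M 0 = 1)
    (hlc : ∀ p : ℕ, M (p + 1) ^ 2 ≤ M p * M (p + 2)) (h12 : cond12L2Rseq M) :
    (fun x : Fin 1 → ℝ => extremalFn M (x 0)) ∈ SRoumieuSeq M 1 := by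
  have hcd := contDiff_extremalFn hpos h0 hlc
  refine ⟨hcd.comp (contDiff_apply ℝ ℝ 0), ?_⟩
  obtain ⟨B, hB, C, hC, H, hH, hb⟩ := h12
  have hK1 : (1 : ℝ) ≤ max C 1 := le_max_right _ _
  refine ⟨4 * B, by positivity, 2 * max C 1 * H, by positivity, fun α β x => ?_⟩
  rw [mderiv_one hcd]
  simp only [mpow, msize, Finset.univ_unique, Fin.default_eq_zero, Fin.isValue,
    Finset.prod_singleton, Finset.sum_singleton]
  refine (abs_pow_mul_extremalFn_le hpos h0 hlc (α 0) (β 0) (x 0)).trans ?_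
  generalize α 0 = a
  generalize β 0 = b
  have hMk := (hpos (a + b)).le
  have e1 : √((a + b : ℕ) : ℝ) ^ (a + b) ≤ B * max C 1 ^ (a + b) * H ^ (a + b) * M (a + b) := by
    have := hb (a + b) 0
    rw [h0, mul_one, ← sqrt_pow_eq_rpow, add_zero] at this
    refine this.trans ?_
    gcongr
    exact le_max_left _ _
  have e2 : √(b : ℝ) ^ b * M a ≤ B * max C 1 ^ (a + b) * H ^ (a + b) * M (a + b) := by
    have := hb b a
    rw [← sqrt_pow_eq_rpow, add_comm b a] at this
    refine this.trans ?_
    have : C ^ b ≤ max C 1 ^ (a + b) :=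
      calc C ^ b ≤ max C 1 ^ b := by gcongr; exact le_max_left _ _
        _ ≤ max C 1 ^ (a + b) := pow_le_pow_right₀ hK1 (by omega)
    gcongr
  calc 2 * (2 ^ (a + b) * (√((a + b : ℕ) : ℝ) ^ (a + b) + √(b : ℝ) ^ b * M a))
      ≤ 2 * (2 ^ (a + b) * (B * max C 1 ^ (a + b) * H ^ (a + b) * M (a + b)
          + B * max C 1 ^ (a + b) * H ^ (a + b) * M (a + b))) := by gcongr
    _ = _ := by
      rw [mul_pow, mul_pow]
      ring

lemma ltriangle_of_subset {M N : ℕ → ℝ} (hM : ∀ p, 0 < M p) (hN : ∀ p, 0 < N p)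
    (hLC : IsLC M) (h12 : cond12L2Rseq M) (hsub : SRoumieuSeq M 1 ⊆ SBeurlingSeq N 1) :
    seqLtriangle M N := by
  rw [seqLtriangle_iff hM hN]
  intro h hh
  have hcd := contDiff_extremalFn hM hLC.norm0 hLC.logConvex
  obtain ⟨C, hC, hb⟩ :=
    (hsub (extremalFn_mem_roumieu hM hLC.norm0 hLC.logConvex h12)).2 (h / 2) (by positivity)
  refine ⟨C, hC, fun n => ?_⟩
  have h1 := hb (fun _ => n) (fun _ => 0) (fun _ => M (n + 1) / M n)
  rw [mderiv_one hcd] at h1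
  simp only [mpow, msize, Finset.univ_unique, Fin.default_eq_zero, Fin.isValue,
    Finset.prod_singleton, Finset.sum_singleton, iteratedDeriv_zero, add_zero] at h1
  have h2 := (le_pow_mul_extremalFn hM hLC.norm0 hLC.logConvex n).trans ((le_abs_self _).trans h1)
  calc M n = 2 ^ n * ((1 / 2) ^ n * M n) := by
        rw [← mul_assoc, ← mul_pow]
        norm_num
    _ ≤ 2 ^ n * (C * (h / 2) ^ n * N n) := by gcongr
    _ = C * h ^ n * N n := by
        rw [div_pow]
        field_simp

/-- Theorem `Gelfandweightsequence` (II): for `M, N ∈ LC` satisfying (M2'),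
with `M` satisfying (12L2R) and `N` satisfying (12L2B), `M ◁ N` iff
`S_{{M}}(ℝ^d) ⊆ S_(N)(ℝ^d)` for all `d`; the forward implication holds for arbitrary
positive sequences and the converse needs only `d = 1`. -/
theorem roumieu_beurling_inclusion_characterization_weight_sequences (M N : ℕ → ℝ)
    (hMpos : ∀ p, 0 < M p) (hNpos : ∀ p, 0 < N p) :
    (seqLtriangle M N → ∀ d : ℕ, 0 < d → SRoumieuSeq M d ⊆ SBeurlingSeq N d) ∧
    (IsLC M → IsLC N → condM2' M → condM2' N → cond12L2Rseq M → cond12L2Bseq N →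
      ((seqLtriangle M N ↔ ∀ d : ℕ, 0 < d → SRoumieuSeq M d ⊆ SBeurlingSeq N d) ∧
        (SRoumieuSeq M 1 ⊆ SBeurlingSeq N 1 → seqLtriangle M N))) := by
  have hfwd : seqLtriangle M N → ∀ d : ℕ, 0 < d → SRoumieuSeq M d ⊆ SBeurlingSeq N d :=
    fun H d _ => roumieu_subset_beurling hMpos hNpos H d
  refine ⟨hfwd, fun hM _ _ _ h12 _ => ?_⟩
  have hconv := ltriangle_of_subset hMpos hNpos hM h12
  exact ⟨⟨hfwd, fun H => hconv (H 1 one_pos)⟩, hconv⟩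
end
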